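/- Multiple Khintchine inequality: let 0 < r < ∞ and m ∈ ℕ, m ≥ 1. For every N ∈ ℕ and every array of real scalars (y_{i₁…i_m})_{i₁,…,i_m=1}^{N} one has (∑_{i₁,…,i_m=1}^{N} |y_{i₁…i_m}|²)^{1/2} ≤ (A_r)^m · (∫_{[0,1]^m} |∑_{i₁,…,i_m=1}^{N} r_{i₁}(t₁)···r_{i_m}(t_m) y_{i₁…i_m}|^{r} dt₁···dt_m)^{1/r}. -/

import Mathlib

open MeasureTheory Real Filter

/-- The `j`-th Rademacher function, `r_j(t) = sgn(sin(2^j π t))`. -/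
noncomputable def rademacher (j : ℕ) (t : ℝ) : ℝ :=
  Real.sign (Real.sin ((2 : ℝ) ^ j * Real.pi * t))

/-- `p₀ ∈ (1,2)` is the unique solution of `Γ((p₀+1)/2) = √π / 2`. -/
noncomputable def khintchineP0 : ℝ :=
  sInf {p : ℝ | 1 < p ∧ p < 2 ∧ Real.Gamma ((p + 1) / 2) = Real.sqrt Real.pi / 2}

/-- The optimal constant `A_r` in the Khintchine inequality. -/
noncomputable def khintchineA (r : ℝ) : ℝ :=
  if r ≤ khintchineP0 then (2 : ℝ) ^ (1 / r - 1 / 2)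
  else if r < 2 then
    (1 / Real.sqrt 2) * (Real.Gamma ((r + 1) / 2) / Real.sqrt Real.pi) ^ (-(1 / r))
  else 1

/-- The `ℓ_p` norm of a vector in `ℝⁿ` (for finite `p`). -/
noncomputable def lpNorm (p : ℝ) {n : ℕ} (x : Fin n → ℝ) : ℝ :=
  (∑ i, |x i| ^ p) ^ (1 / p)

/-- The `ℓ_∞` norm of a vector in `ℝⁿ`. -/
noncomputable def linfNorm {n : ℕ} (x : Fin n → ℝ) : ℝ :=
  ⨆ i, |x i|

theorem nonneg_of_deriv_nonneg_Ico {f f' : ℝ → ℝ} {b : ℝ} (h0 : 0 ≤ f 0)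
    (hd : ∀ x, 0 ≤ x → x < b → HasDerivAt f (f' x) x)
    (hf' : ∀ x, 0 ≤ x → x < b → 0 ≤ f' x) {x : ℝ} (hx0 : 0 ≤ x) (hxb : x < b) : 0 ≤ f x := by
  have hmono : MonotoneOn f (Set.Ico 0 b) := by
    apply monotoneOn_of_deriv_nonneg (convex_Ico 0 b)
    · exact fun y hy => (hd y hy.1 hy.2).continuousAt.continuousWithinAt
    · intro y hy
      rw [interior_Ico] at hy
      exact (hd y hy.1.le hy.2).differentiableAt.differentiableWithinAt
    · intro y hy
      rw [interior_Ico] at hy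
      rw [(hd y hy.1.le hy.2).deriv]
      exact hf' y hy.1.le hy.2
  exact h0.trans (hmono ⟨le_rfl, hx0.trans_lt hxb⟩ ⟨hx0, hxb⟩ hx0)

theorem sin_ge_cubic {x : ℝ} (hx : 0 ≤ x) : x - x ^ 3 / 6 ≤ sin x := by
  have := nonneg_of_deriv_nonneg_Ico (f := fun x => sin x - (x - x ^ 3 / 6))
    (f' := fun x => cos x - (1 - x ^ 2 / 2)) (b := x + 1) (by simp)
    (fun y _ _ => by
      refine HasDerivAt.congr_deriv
        ((hasDerivAt_sin y).sub ((hasDerivAt_id' y).sub ((hasDerivAt_pow 3 y).div_const 6))) ?_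
      push_cast; ring)
    (fun y _ _ => by linarith [one_sub_sq_div_two_le_cos (x := y)]) hx (by linarith)
  linarith

theorem cos_le_quartic {x : ℝ} (hx : 0 ≤ x) : cos x ≤ 1 - x ^ 2 / 2 + x ^ 4 / 24 := by
  have := nonneg_of_deriv_nonneg_Ico (f := fun x => 1 - x ^ 2 / 2 + x ^ 4 / 24 - cos x)
    (f' := fun x => sin x - (x - x ^ 3 / 6)) (b := x + 1) (by simp)
    (fun y _ _ => by
      refine HasDerivAt.congr_deriv (((((hasDerivAt_pow 2 y).div_const 2).const_sub 1).add
        ((hasDerivAt_pow 4 y).div_const 24)).sub (hasDerivAt_cos y)) ?_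
      push_cast; ring)
    (fun y hy _ => by linarith [sin_ge_cubic hy]) hx (by linarith)
  linarith

theorem sin_le_quintic {x : ℝ} (hx : 0 ≤ x) : sin x ≤ x - x ^ 3 / 6 + x ^ 5 / 120 := by
  have := nonneg_of_deriv_nonneg_Ico (f := fun x => x - x ^ 3 / 6 + x ^ 5 / 120 - sin x)
    (f' := fun x => 1 - x ^ 2 / 2 + x ^ 4 / 24 - cos x) (b := x + 1) (by simp)
    (fun y _ _ => by
      refine HasDerivAt.congr_deriv
        ((((hasDerivAt_id' y).sub ((hasDerivAt_pow 3 y).div_const 6)).add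
        ((hasDerivAt_pow 5 y).div_const 120)).sub (hasDerivAt_sin y)) ?_
      push_cast; ring)
    (fun y hy _ => by linarith [cos_le_quartic hy]) hx (by linarith)
  linarith

theorem cos_ge_sextic {x : ℝ} (hx : 0 ≤ x) :
    1 - x ^ 2 / 2 + x ^ 4 / 24 - x ^ 6 / 720 ≤ cos x := by
  have := nonneg_of_deriv_nonneg_Ico
    (f := fun x => cos x - (1 - x ^ 2 / 2 + x ^ 4 / 24 - x ^ 6 / 720))
    (f' := fun x => x - x ^ 3 / 6 + x ^ 5 / 120 - sin x) (b := x + 1) (by simp)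
    (fun y _ _ => by
      refine HasDerivAt.congr_deriv
        ((hasDerivAt_cos y).sub (((((hasDerivAt_pow 2 y).div_const 2).const_sub 1).add
        ((hasDerivAt_pow 4 y).div_const 24)).sub ((hasDerivAt_pow 6 y).div_const 720))) ?_
      push_cast; ring)
    (fun y hy _ => by linarith [sin_le_quintic hy]) hx (by linarith)
  linarith

theorem cos_pos_of_nonneg_of_lt {x : ℝ} (h0 : 0 ≤ x) (h1 : x < π / 2) : 0 < cos x :=
  cos_pos_of_mem_Ioo ⟨by linarith [pi_pos], h1⟩

theorem le_tan_of_deriv_le {P P' Q : ℝ → ℝ} (h0 : P 0 = 0)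
    (hP : ∀ x, HasDerivAt P (P' x) x) (hQ : ∀ x, 0 ≤ x → x < π / 2 → 0 ≤ Q x ∧ Q x ≤ tan x)
    (hPQ : ∀ x, 0 ≤ x → P' x ≤ 1 + Q x ^ 2) {x : ℝ} (hx : 0 ≤ x) (hx' : x < π / 2) :
    P x ≤ tan x := by
  have := nonneg_of_deriv_nonneg_Ico (f := fun x => tan x - P x)
    (f' := fun x => 1 / cos x ^ 2 - P' x) (b := π / 2) (by simp [h0])
    (fun y hy hy' => (hasDerivAt_tan (cos_pos_of_nonneg_of_lt hy hy').ne').sub (hP y))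
    (fun y hy hy' => by
      have hc := cos_pos_of_nonneg_of_lt hy hy'
      have h1 : 1 / cos y ^ 2 = 1 + tan y ^ 2 := by
        rw [tan_eq_sin_div_cos]; field_simp; linarith [sin_sq_add_cos_sq y]
      obtain ⟨hq, hq'⟩ := hQ y hy hy'
      have := hPQ y hy
      rw [h1]; nlinarith) hx hx'
  linarith

theorem tan_ge_taylor {x : ℝ} (hx : 0 ≤ x) (hx' : x < π / 2) :
    x + x ^ 3 / 3 + 2 * x ^ 5 / 15 + 17 * x ^ 7 / 315 + 62 * x ^ 9 / 2835
      + 1382 * x ^ 11 / 155925 ≤ tan x := by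
  have t3 : ∀ x : ℝ, 0 ≤ x → x < π / 2 → 0 ≤ x + x ^ 3 / 3 ∧ x + x ^ 3 / 3 ≤ tan x := by
    intro x hx hx'
    refine ⟨by positivity, ?_⟩
    refine le_tan_of_deriv_le (P := fun x => x + x ^ 3 / 3) (P' := fun x => 1 + x ^ 2) (Q := id)
      (by simp) (fun y => ?_) (fun y h h' => ⟨h, le_tan h h'⟩) (fun y hy => le_rfl) hx hx'
    refine HasDerivAt.congr_deriv ((hasDerivAt_id' y).add ((hasDerivAt_pow 3 y).div_const 3)) ?_
    push_cast; ring
  have t5 : ∀ x : ℝ, 0 ≤ x → x < π / 2 → 0 ≤ x + x ^ 3 / 3 + 2 * x ^ 5 / 15 ∧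
      x + x ^ 3 / 3 + 2 * x ^ 5 / 15 ≤ tan x := by
    intro x hx hx'
    refine ⟨by positivity, ?_⟩
    refine le_tan_of_deriv_le (P := fun x => x + x ^ 3 / 3 + 2 * x ^ 5 / 15)
      (P' := fun x => 1 + x ^ 2 + 2 * x ^ 4 / 3) (by simp) (fun y => ?_) t3
      (fun y hy => ?_) hx hx'
    · refine HasDerivAt.congr_deriv (((hasDerivAt_id' y).add ((hasDerivAt_pow 3 y).div_const 3)).add
        (((hasDerivAt_pow 5 y).const_mul 2).div_const 15)) ?_
      push_cast; ring
    · have : 0 ≤ y ^ 6 := by positivity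
      linarith [show (y + y ^ 3 / 3) ^ 2 = y ^ 2 + 2 * y ^ 4 / 3 + y ^ 6 / 9 by ring]
  have t7 : ∀ x : ℝ, 0 ≤ x → x < π / 2 →
      0 ≤ x + x ^ 3 / 3 + 2 * x ^ 5 / 15 + 17 * x ^ 7 / 315 ∧
      x + x ^ 3 / 3 + 2 * x ^ 5 / 15 + 17 * x ^ 7 / 315 ≤ tan x := by
    intro x hx hx'
    refine ⟨by positivity, ?_⟩
    refine le_tan_of_deriv_le
      (P := fun x => x + x ^ 3 / 3 + 2 * x ^ 5 / 15 + 17 * x ^ 7 / 315)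
      (P' := fun x => 1 + x ^ 2 + 2 * x ^ 4 / 3 + 17 * x ^ 6 / 45) (by simp) (fun y => ?_) t5
      (fun y hy => ?_) hx hx'
    · refine HasDerivAt.congr_deriv
        ((((hasDerivAt_id' y).add ((hasDerivAt_pow 3 y).div_const 3)).add
        (((hasDerivAt_pow 5 y).const_mul 2).div_const 15)).add
        (((hasDerivAt_pow 7 y).const_mul 17).div_const 315)) ?_
      push_cast; ring
    · have h8 : 0 ≤ y ^ 8 := by positivity
      have h10 : 0 ≤ y ^ 10 := by positivity
      nlinarith [h8, h10]
  have t9 : ∀ x : ℝ, 0 ≤ x → x < π / 2 →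
      0 ≤ x + x ^ 3 / 3 + 2 * x ^ 5 / 15 + 17 * x ^ 7 / 315 + 62 * x ^ 9 / 2835 ∧
      x + x ^ 3 / 3 + 2 * x ^ 5 / 15 + 17 * x ^ 7 / 315 + 62 * x ^ 9 / 2835 ≤ tan x := by
    intro x hx hx'
    refine ⟨by positivity, ?_⟩
    refine le_tan_of_deriv_le
      (P := fun x => x + x ^ 3 / 3 + 2 * x ^ 5 / 15 + 17 * x ^ 7 / 315 + 62 * x ^ 9 / 2835)
      (P' := fun x => 1 + x ^ 2 + 2 * x ^ 4 / 3 + 17 * x ^ 6 / 45 + 62 * x ^ 8 / 315)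
      (by simp) (fun y => ?_) t7 (fun y hy => ?_) hx hx'
    · refine HasDerivAt.congr_deriv
        (((((hasDerivAt_id' y).add ((hasDerivAt_pow 3 y).div_const 3)).add
        (((hasDerivAt_pow 5 y).const_mul 2).div_const 15)).add
        (((hasDerivAt_pow 7 y).const_mul 17).div_const 315)).add
        (((hasDerivAt_pow 9 y).const_mul 62).div_const 2835)) ?_
      push_cast; ring
    · have h8 : 0 ≤ y ^ 10 := by positivity
      have h10 : 0 ≤ y ^ 12 := by positivity
      have h12 : 0 ≤ y ^ 14 := by positivity
      nlinarith [h8, h10, h12]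
  refine le_tan_of_deriv_le
    (P := fun x => x + x ^ 3 / 3 + 2 * x ^ 5 / 15 + 17 * x ^ 7 / 315 + 62 * x ^ 9 / 2835
      + 1382 * x ^ 11 / 155925)
    (P' := fun x => 1 + x ^ 2 + 2 * x ^ 4 / 3 + 17 * x ^ 6 / 45 + 62 * x ^ 8 / 315
      + 1382 * x ^ 10 / 14175)
    (by simp) (fun y => ?_) t9 (fun y hy => ?_) hx hx'
  · refine HasDerivAt.congr_deriv
      ((((((hasDerivAt_id' y).add ((hasDerivAt_pow 3 y).div_const 3)).add
      (((hasDerivAt_pow 5 y).const_mul 2).div_const 15)).add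
      (((hasDerivAt_pow 7 y).const_mul 17).div_const 315)).add
      (((hasDerivAt_pow 9 y).const_mul 62).div_const 2835)).add
      (((hasDerivAt_pow 11 y).const_mul 1382).div_const 155925)) ?_
    push_cast; ring
  · have h8 : 0 ≤ y ^ 12 := by positivity
    have h10 : 0 ≤ y ^ 14 := by positivity
    have h12 : 0 ≤ y ^ 16 := by positivity
    have h14 : 0 ≤ y ^ 18 := by positivity
    nlinarith [h8, h10, h12, h14]

/-- `negLogCosSq x = -log (cos x ^ 2)` for `|x| < π / 2`. -/
noncomputable def negLogCosSq (x : ℝ) : ℝ := -2 * log (cos x)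

theorem hasDerivAt_negLogCosSq {x : ℝ} (h0 : 0 ≤ x) (h1 : x < π / 2) :
    HasDerivAt negLogCosSq (2 * tan x) x := by
  have hc := cos_pos_of_nonneg_of_lt h0 h1
  refine HasDerivAt.congr_deriv (((hasDerivAt_cos x).log hc.ne').const_mul (-2)) ?_
  rw [tan_eq_sin_div_cos]; ring

theorem negLogCosSq_ge_taylor {x : ℝ} (hx : 0 ≤ x) (hx' : x < π / 2) :
    x ^ 2 + x ^ 4 / 6 + 2 * x ^ 6 / 45 + 17 * x ^ 8 / 1260 + 62 * x ^ 10 / 14175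
      + 1382 * x ^ 12 / 935550 ≤ negLogCosSq x := by
  have := nonneg_of_deriv_nonneg_Ico (f := fun x => negLogCosSq x -
      (x ^ 2 + x ^ 4 / 6 + 2 * x ^ 6 / 45 + 17 * x ^ 8 / 1260 + 62 * x ^ 10 / 14175
      + 1382 * x ^ 12 / 935550))
    (f' := fun x => 2 * tan x - 2 * (x + x ^ 3 / 3 + 2 * x ^ 5 / 15 + 17 * x ^ 7 / 315
      + 62 * x ^ 9 / 2835 + 1382 * x ^ 11 / 155925)) (b := π / 2) (by simp [negLogCosSq])
    (fun y hy hy' => by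
      refine HasDerivAt.congr_deriv
        ((hasDerivAt_negLogCosSq hy hy').sub ((((((hasDerivAt_pow 2 y).add
        ((hasDerivAt_pow 4 y).div_const 6)).add
        (((hasDerivAt_pow 6 y).const_mul 2).div_const 45)).add
        (((hasDerivAt_pow 8 y).const_mul 17).div_const 1260)).add
        (((hasDerivAt_pow 10 y).const_mul 62).div_const 14175)).add
        (((hasDerivAt_pow 12 y).const_mul 1382).div_const 935550))) ?_
      push_cast; ring)
    (fun y hy hy' => by linarith [tan_ge_taylor hy hy']) hx hx'
  linarith

theorem sin_taylor_mul_le_cos_taylor_mul {z X : ℝ} (hz : 0 ≤ z) (hz' : z ≤ 144 / 100)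
    (hX : X = 1 + z / 6 + 2 * z ^ 2 / 45 + 17 * z ^ 3 / 1260 + 62 * z ^ 4 / 14175
      + 1382 * z ^ 5 / 935550) :
    (1 - z / 6 + z ^ 2 / 120) * (9 + X) ≤
      (1 - z / 2 + z ^ 2 / 24 - z ^ 3 / 720) * (15 * X ^ 2 - 5 * X) := by
  have h (k : ℕ) : 0 ≤ z * ((144 / 100) ^ k - z ^ k) :=
    mul_nonneg hz (sub_nonneg.2 (pow_le_pow_left₀ hz hz' k))
  subst hX
  linarith [h 1, h 2, h 3, h 4, h 5, h 6, h 7, h 8, h 9, h 10, h 12, pow_nonneg hz 12]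

theorem sin_div_mul_le {x : ℝ} (hx : 0 < x) (hx' : x ≤ 6 / 5) :
    sin x / x * (9 + negLogCosSq x / x ^ 2) ≤
      cos x * (15 * (negLogCosSq x / x ^ 2) ^ 2 - 5 * (negLogCosSq x / x ^ 2)) := by
  have hlt : x < π / 2 := by linarith [pi_gt_three]

  set z := x ^ 2 with hz
  have hz0 : 0 < z := by positivity
  have hz1 : z ≤ 144 / 100 := by rw [hz]; nlinarith
  obtain ⟨X, hX⟩ : ∃ X, X = 1 + z / 6 + 2 * z ^ 2 / 45 + 17 * z ^ 3 / 1260 + 62 * z ^ 4 / 14175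
      + 1382 * z ^ 5 / 935550 := ⟨_, rfl⟩
  have hp := sin_taylor_mul_le_cos_taylor_mul hz0.le hz1 hX
  have hX1 : 1 ≤ X := by rw [hX]; have : 0 < z / 6 := by positivity
                         have : 0 ≤ 2 * z ^ 2 / 45 + 17 * z ^ 3 / 1260 + 62 * z ^ 4 / 14175
                            + 1382 * z ^ 5 / 935550 := by positivity
                         linarith
  have hXT : X ≤ negLogCosSq x / z := by
    rw [le_div_iff₀ hz0]
    calc X * z = x ^ 2 + x ^ 4 / 6 + 2 * x ^ 6 / 45 + 17 * x ^ 8 / 1260 + 62 * x ^ 10 / 14175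
      + 1382 * x ^ 12 / 935550 := by rw [hX, hz]; ring
      _ ≤ _ := negLogCosSq_ge_taylor hx.le hlt
  set Y := negLogCosSq x / z
  have hs : sin x / x ≤ 1 - z / 6 + z ^ 2 / 120 := by
    rw [div_le_iff₀ hx]
    calc sin x ≤ _ := sin_le_quintic hx.le
      _ = _ := by rw [hz]; ring
  have hc : 1 - z / 2 + z ^ 2 / 24 - z ^ 3 / 720 ≤ cos x := by
    calc _ = 1 - x ^ 2 / 2 + x ^ 4 / 24 - x ^ 6 / 720 := by rw [hz]; ring
      _ ≤ _ := cos_ge_sextic hx.le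
  have hc2 : 3 / 10 ≤ 1 - z / 2 + z ^ 2 / 24 - z ^ 3 / 720 := by nlinarith [sq_nonneg z]
  have hs2 : 1 - z / 6 + z ^ 2 / 120 ≤ 1 := by nlinarith
  obtain ⟨C, hC⟩ : ∃ C, C = 1 - z / 2 + z ^ 2 / 24 - z ^ 3 / 720 := ⟨_, rfl⟩
  obtain ⟨S, hS⟩ : ∃ S, S = 1 - z / 6 + z ^ 2 / 120 := ⟨_, rfl⟩
  rw [← hC] at hp hc hc2
  rw [← hS] at hp hs hs2
  have h1 : sin x / x * (9 + Y) ≤ S * (9 + Y) := by gcongr; linarith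
  have h2 : C * (15 * Y ^ 2 - 5 * Y) ≤ cos x * (15 * Y ^ 2 - 5 * Y) := by
    gcongr; nlinarith
  have h3 : S * (9 + Y) ≤ C * (15 * Y ^ 2 - 5 * Y) := by
    have : 0 ≤ (Y - X) * (C * (15 * (Y + X) - 5) - S) := by
      apply mul_nonneg (by linarith)
      nlinarith
    nlinarith
  linarith

theorem one_le_negLogCosSq_div {x : ℝ} (hx : 0 < x) (hx' : x < π / 2) :
    x ^ 2 ≤ negLogCosSq x := by
  have := negLogCosSq_ge_taylor hx.le hx'
  have h : 0 ≤ x ^ 4 / 6 + 2 * x ^ 6 / 45 + 17 * x ^ 8 / 1260 + 62 * x ^ 10 / 14175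
      + 1382 * x ^ 12 / 935550 := by positivity
  linarith

theorem negLogCosSq_pos {x : ℝ} (hx : 0 < x) (hx' : x < π / 2) : 0 < negLogCosSq x :=
  lt_of_lt_of_le (by positivity) (one_le_negLogCosSq_div hx hx')

theorem two_mul_mul_tan_add_one_le {q x : ℝ} (hq : 9 / 10 ≤ q) (hq1 : q ≤ 1) (hx : 0 < x)
    (hx' : x ≤ 6 / 5) :
    2 * q * (x * tan x / negLogCosSq x) + 1 ≤ (2 * q + 1) * (negLogCosSq x / x ^ 2) ^ q := by
  have hlt : x < π / 2 := by linarith [pi_gt_three]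
  have hT := negLogCosSq_pos hx hlt
  have hc := cos_pos_of_nonneg_of_lt hx.le hlt
  have key := sin_div_mul_le hx hx'
  have hXe : x ^ 2 * (negLogCosSq x / x ^ 2) = negLogCosSq x := by field_simp
  have hX1 : 1 ≤ negLogCosSq x / x ^ 2 := by
    rw [le_div_iff₀ (by positivity)]; linarith [one_le_negLogCosSq_div hx hlt]
  set X := negLogCosSq x / x ^ 2
  set E := x * tan x / negLogCosSq x with hE
  have hEX : sin x / x = cos x * (E * X) := by
    rw [hE, ← hXe, tan_eq_sin_div_cos]; field_simp
  have hE0 : 0 ≤ E := by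
    have := tan_nonneg_of_nonneg_of_le_pi_div_two hx.le hlt.le
    positivity
  have h1 : E * (9 + X) ≤ 15 * X - 5 := by
    rw [hEX] at key
    have : (cos x * X) * (E * (9 + X)) ≤ (cos x * X) * (15 * X - 5) := by nlinarith
    exact le_of_mul_le_mul_left this (by positivity)
  have h2 : X ^ (1 - q) ≤ 1 + (1 - q) * (X - 1) := by
    have := rpow_one_add_le_one_add_mul_self (s := X - 1) (p := 1 - q) (by linarith)
      (by linarith) (by linarith)
    simpa using this
  have h3 : X ^ (1 - q) ≤ (9 + X) / 10 := by nlinarith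
  have h4 : X ^ q * X ^ (1 - q) = X := by
    rw [← rpow_add (by linarith)]; simp
  have hXq : 0 < X ^ q := by positivity
  have hXq_pos : 0 < X ^ (1 - q) := by positivity
  have h5 : (2 * q * E + 1) * X ^ (1 - q) ≤ (2 * q + 1) * X := by
    have : E * X ^ (1 - q) ≤ E * ((9 + X) / 10) := by gcongr
    have : 2 * (E * X ^ (1 - q)) ≤ 3 * X - 1 := by linarith
    nlinarith
  have : (2 * q * E + 1) * X ^ (1 - q) ≤ ((2 * q + 1) * X ^ q) * X ^ (1 - q) := by
    rw [mul_assoc (2 * q + 1), h4]; exact h5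
  exact le_of_mul_le_mul_right this hXq_pos

/-- The excess of `x ^ (-p)` over `(negLogCosSq x) ^ (-p / 2)`, divided by `x`, is antitone. -/
theorem antitoneOn_rpow_sub_div {q : ℝ} (hq : 9 / 10 ≤ q) (hq1 : q ≤ 1) :
    AntitoneOn (fun x : ℝ => (x ^ (-(2 * q)) - negLogCosSq x ^ (-q)) / x)
      (Set.Ioc 0 (6 / 5)) := by
  have hder : ∀ x ∈ Set.Ioc 0 (6 / 5), HasDerivAt
      (fun x : ℝ => (x ^ (-(2 * q)) - negLogCosSq x ^ (-q)) / x)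
      (((-(2 * q) * x ^ (-(2 * q) - 1) - 2 * tan x * (-q) * negLogCosSq x ^ (-q - 1)) * x -
        (x ^ (-(2 * q)) - negLogCosSq x ^ (-q)) * 1) / x ^ 2) x := by
    rintro x ⟨hx, hx'⟩
    have hlt : x < π / 2 := by linarith [pi_gt_three]
    have hT := negLogCosSq_pos hx hlt
    exact ((hasDerivAt_rpow_const (Or.inl hx.ne')).sub
      ((hasDerivAt_negLogCosSq hx.le hlt).rpow_const (Or.inl hT.ne'))).div (hasDerivAt_id' x) hx.ne'
  apply antitoneOn_of_deriv_nonpos (convex_Ioc _ _)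
  · exact fun y hy => (hder y hy).continuousAt.continuousWithinAt
  · intro y hy
    rw [interior_Ioc] at hy
    exact (hder y ⟨hy.1, hy.2.le⟩).differentiableAt.differentiableWithinAt
  · intro x hy
    rw [interior_Ioc] at hy
    rw [(hder x ⟨hy.1, hy.2.le⟩).deriv]
    have hx : 0 < x := hy.1
    have hlt : x < π / 2 := by linarith [pi_gt_three, hy.2]
    have hT := negLogCosSq_pos hx hlt
    have key := two_mul_mul_tan_add_one_le hq hq1 hx hy.2.le
    apply div_nonpos_of_nonpos_of_nonneg _ (sq_nonneg x)
    have e1 : x ^ (-(2 * q) - 1) = x ^ (-(2 * q)) / x := by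
      rw [rpow_sub_one hx.ne']
    have e2 : negLogCosSq x ^ (-q - 1) = negLogCosSq x ^ (-q) / negLogCosSq x := by
      rw [rpow_sub_one hT.ne']
    have e3 : (negLogCosSq x / x ^ 2) ^ q * negLogCosSq x ^ (-q) = x ^ (-(2 * q)) := by
      rw [div_rpow hT.le (by positivity), rpow_neg hT.le, rpow_neg hx.le, rpow_mul hx.le]
      have : (negLogCosSq x) ^ q ≠ 0 := (rpow_pos_of_pos hT q).ne'
      norm_cast
      field_simp
    have e4 : 0 < negLogCosSq x ^ (-q) := rpow_pos_of_pos hT _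
    rw [e1, e2, ← e3]
    have := mul_le_mul_of_nonneg_right key e4.le
    field_simp
    field_simp at this
    nlinarith

/-- The difference `(c - x) ^ (-p) - (c + x) ^ (-p)`. -/
noncomputable def rpowGap (p c x : ℝ) : ℝ := (c - x) ^ (-p) - (c + x) ^ (-p)

theorem rpowGap_nonneg {p c x : ℝ} (hp : 0 < p) (hx : 0 ≤ x) (hxc : x < c) :
    0 ≤ rpowGap p c x :=
  sub_nonneg.2 (rpow_le_rpow_of_nonpos (by linarith) (by linarith) (by linarith))

theorem hasDerivAt_rpowGap {p c x : ℝ} (hx : 0 ≤ x) (hxc : x < c) :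
    HasDerivAt (rpowGap p c) (p * ((c - x) ^ (-p - 1) + (c + x) ^ (-p - 1))) x := by
  have h1 := ((hasDerivAt_id' x).const_sub c).rpow_const (p := -p)
    (Or.inl (by linarith : c - x ≠ 0))
  have h2 := ((hasDerivAt_id' x).const_add c).rpow_const (p := -p)
    (Or.inl (by linarith : c + x ≠ 0))
  exact (h1.sub h2).congr_deriv (by ring)

theorem rpowGap_div_le {p c x y : ℝ} (hp : 0 < p) (hx : 0 < x) (hxy : x ≤ y) (hyc : y < c) :
    rpowGap p c x / x ≤ rpowGap p c y / y := by
  have hd : ∀ x, 0 ≤ x → x < c → HasDerivAt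
      (fun x => x * (p * ((c - x) ^ (-p - 1) + (c + x) ^ (-p - 1))) - rpowGap p c x)
      (x * (p * ((p + 1) * ((c - x) ^ (-p - 1 - 1) - (c + x) ^ (-p - 1 - 1))))) x := by
    intro x hx hxc
    have h1 := ((hasDerivAt_id' x).const_sub c).rpow_const (p := -p - 1)
      (Or.inl (by linarith : c - x ≠ 0))
    have h2 := ((hasDerivAt_id' x).const_add c).rpow_const (p := -p - 1)
      (Or.inl (by linarith : c + x ≠ 0))
    exact (((hasDerivAt_id' x).mul ((h1.add h2).const_mul p)).sub
      (hasDerivAt_rpowGap hx hxc)).congr_deriv (by simp only [Pi.add_apply]; ring)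
  have hnum : ∀ x, 0 ≤ x → x < c →
      0 ≤ x * (p * ((c - x) ^ (-p - 1) + (c + x) ^ (-p - 1))) - rpowGap p c x := by
    intro x hx hxc
    refine nonneg_of_deriv_nonneg_Ico (f := fun x =>
      x * (p * ((c - x) ^ (-p - 1) + (c + x) ^ (-p - 1))) - rpowGap p c x)
      (by simp [rpowGap]) hd (fun y hy hyc => ?_) hx hxc
    have : (c + y) ^ (-p - 1 - 1) ≤ (c - y) ^ (-p - 1 - 1) :=
      rpow_le_rpow_of_nonpos (by linarith) (by linarith) (by linarith)
    have := sub_nonneg.2 this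
    positivity
  have hd' : ∀ x, 0 < x → x < c → HasDerivAt (fun x => rpowGap p c x / x)
      (((p * ((c - x) ^ (-p - 1) + (c + x) ^ (-p - 1))) * x - rpowGap p c x * 1) / x ^ 2) x :=
    fun x hx hxc => (hasDerivAt_rpowGap hx.le hxc).div (hasDerivAt_id' x) hx.ne'
  have hmono : MonotoneOn (fun x => rpowGap p c x / x) (Set.Ioo 0 c) := by
    apply monotoneOn_of_deriv_nonneg (convex_Ioo 0 c)
    · exact fun y hy => (hd' y hy.1 hy.2).continuousAt.continuousWithinAt
    · intro y hy
      rw [interior_Ioo] at hy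
      exact (hd' y hy.1 hy.2).differentiableAt.differentiableWithinAt
    · intro y hy
      rw [interior_Ioo] at hy
      rw [(hd' y hy.1 hy.2).deriv]
      exact div_nonneg (by linarith [hnum y hy.1.le hy.2]) (sq_nonneg y)
  exact hmono ⟨hx, by linarith⟩ ⟨by linarith, hyc⟩ hxy

/-- The sum of `(kπ - x) ^ (-p) - (kπ + x) ^ (-p)` over `k ≥ 1`. -/
noncomputable def gapSum (p x : ℝ) : ℝ := ∑' k : ℕ, rpowGap p ((k + 1) * π) x

/-- The sum of `(kπ + x) ^ (-p) - ((k + 1)π - x) ^ (-p)` over `k ≥ 0`. -/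
noncomputable def cosGapSum (p x : ℝ) : ℝ := ∑' k : ℕ, rpowGap p ((k + 1 / 2) * π) (π / 2 - x)

theorem sum_rpowGap_half (p x : ℝ) (n : ℕ) :
    ∑ k ∈ Finset.range n, rpowGap p ((k + 1 / 2) * π) (π / 2 - x) =
      x ^ (-p) - ∑ k ∈ Finset.range n, rpowGap p ((k + 1) * π) x - (n * π + x) ^ (-p) := by
  induction n with
  | zero => simp
  | succ n ih =>
    rw [Finset.sum_range_succ, Finset.sum_range_succ, ih]
    simp only [rpowGap]
    rw [show ((n : ℝ) + 1 / 2) * π - (π / 2 - x) = n * π + x by ring,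
      show ((n : ℝ) + 1 / 2) * π + (π / 2 - x) = (n + 1) * π - x by ring]
    push_cast; ring

theorem lt_natCast_add_one_mul_pi {x : ℝ} (hx' : x < π / 2) (k : ℕ) : x < (k + 1) * π := by
  have : (0 : ℝ) ≤ k * π := by positivity
  linarith [pi_pos]

theorem pi_div_two_sub_lt {x : ℝ} (hx : 0 < x) (k : ℕ) : π / 2 - x < (k + 1 / 2) * π := by
  have : (0 : ℝ) ≤ k * π := by positivity
  linarith [pi_pos]

theorem summable_rpowGap {p x : ℝ} (hp : 0 < p) (hx : 0 < x) (hx' : x < π / 2) :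
    Summable fun k : ℕ => rpowGap p ((k + 1) * π) x := by
  refine summable_of_sum_range_le (c := x ^ (-p))
    (fun k => rpowGap_nonneg hp hx.le (lt_natCast_add_one_mul_pi hx' k)) (fun n => ?_)
  have h1 : 0 ≤ ∑ k ∈ Finset.range n, rpowGap p ((k + 1 / 2) * π) (π / 2 - x) :=
    Finset.sum_nonneg fun k _ => rpowGap_nonneg hp (by linarith) (pi_div_two_sub_lt hx k)
  rw [sum_rpowGap_half] at h1
  have : 0 ≤ (n * π + x) ^ (-p) := by positivity
  linarith

theorem hasSum_cosGapSum {p x : ℝ} (hp : 0 < p) (hx : 0 < x) (hx' : x < π / 2) :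
    HasSum (fun k : ℕ => rpowGap p ((k + 1 / 2) * π) (π / 2 - x)) (x ^ (-p) - gapSum p x) := by
  rw [hasSum_iff_tendsto_nat_of_nonneg
    (fun k => rpowGap_nonneg hp (by linarith) (pi_div_two_sub_lt hx k))]
  simp only [sum_rpowGap_half]
  have h1 : Tendsto (fun n : ℕ => (n * π + x) ^ (-p)) atTop (nhds 0) := by
    refine (tendsto_rpow_neg_atTop hp).comp ?_
    exact tendsto_atTop_add_const_right _ _
      (tendsto_natCast_atTop_atTop.atTop_mul_const pi_pos)
  simpa [gapSum] using
    ((summable_rpowGap hp hx hx').hasSum.tendsto_sum_nat.const_sub (x ^ (-p))).sub h1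

theorem cosGapSum_eq {p x : ℝ} (hp : 0 < p) (hx : 0 < x) (hx' : x < π / 2) :
    cosGapSum p x = x ^ (-p) - gapSum p x := (hasSum_cosGapSum hp hx hx').tsum_eq

theorem gapSum_div_le {p x y : ℝ} (hp : 0 < p) (hx : 0 < x) (hxy : x ≤ y) (hy : y < π / 2) :
    gapSum p x / x ≤ gapSum p y / y := by
  simp only [gapSum, ← tsum_div_const]
  exact (summable_rpowGap hp hx (by linarith)).div_const x |>.tsum_le_tsum
    (fun k => rpowGap_div_le hp hx hxy (lt_natCast_add_one_mul_pi hy k))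
    ((summable_rpowGap hp (by linarith) hy).div_const y)

theorem cosGapSum_div_le {p x y : ℝ} (hp : 0 < p) (hx : 0 < x) (hxy : x ≤ y) (hy : y < π / 2) :
    cosGapSum p y / (π / 2 - y) ≤ cosGapSum p x / (π / 2 - x) := by
  simp only [cosGapSum, ← tsum_div_const]
  exact ((hasSum_cosGapSum hp (by linarith) hy).summable.div_const _).tsum_le_tsum
    (fun k => rpowGap_div_le hp (by linarith) (by linarith) (pi_div_two_sub_lt hx k))
    ((hasSum_cosGapSum hp hx (by linarith)).summable.div_const _)

theorem cos_six_fifths_le : cos (6 / 5) ≤ exp (-1) := by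
  have h1 := cos_le_quartic (x := 6 / 5) (by norm_num)
  have h2 := exp_one_lt_d9
  have h3 : 0 < exp 1 := exp_pos 1
  rw [exp_neg, ← one_div, le_div_iff₀ h3]
  nlinarith

theorem two_le_negLogCosSq {x : ℝ} (hx : 6 / 5 ≤ x) (hx' : x < π / 2) : 2 ≤ negLogCosSq x := by
  have h1 : cos x ≤ cos (6 / 5) :=
    cos_le_cos_of_nonneg_of_le_pi (by norm_num) (by linarith) hx
  have hc := cos_pos_of_nonneg_of_lt (by linarith : 0 ≤ x) hx'
  have h2 : log (cos x) ≤ -1 := by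
    rw [log_le_iff_le_exp hc]; exact h1.trans cos_six_fifths_le
  rw [negLogCosSq]; linarith

theorem negLogCosSq_six_fifths_le : negLogCosSq (6 / 5) ≤ 207 / 100 := by
  have h1 := cos_ge_sextic (x := 6 / 5) (by norm_num)
  have h2 : -(1035 / 1000) ≤ log (cos (6 / 5)) := by
    rw [le_log_iff_exp_le (by linarith)]
    have e1 : exp (-(1035 / 1000)) = (exp 1)⁻¹ * (exp (35 / 1000))⁻¹ := by
      rw [← exp_neg, ← exp_neg, ← exp_add]; norm_num
    have e2 : (1035 / 1000 : ℝ) ≤ exp (35 / 1000) := by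
      have := add_one_le_exp (35 / 1000 : ℝ); linarith
    have e3 := exp_one_gt_d9
    have e4 : (exp 1)⁻¹ ≤ (27 / 10 : ℝ)⁻¹ := by
      apply inv_anti₀ (by norm_num); linarith
    have e5 : (exp (35 / 1000))⁻¹ ≤ (1035 / 1000 : ℝ)⁻¹ := inv_anti₀ (by norm_num) e2
    rw [e1]
    calc _ ≤ (27 / 10 : ℝ)⁻¹ * (1035 / 1000 : ℝ)⁻¹ := by gcongr
      _ ≤ _ := by refine le_trans ?_ h1; norm_num
  rw [negLogCosSq]; linarith

theorem rpow_add_rpow_le {q a b c d : ℝ} (hq : 0 < q) (hq1 : q ≤ 1) (hd : 0 ≤ d) (hdc : d ≤ c)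
    (hbd : d ≤ b) (hsum : a + d ≤ b + c) (hca : c ≤ a) (hba : b ≤ a) :
    a ^ q + d ^ q ≤ b ^ q + c ^ q := by
  have hconc := concaveOn_rpow hq.le hq1
  rcases eq_or_lt_of_le (hdc.trans hca) with h | h
  · have : d = c := by linarith
    have : b = c := by linarith
    subst_vars; linarith
  have hc : c ≤ a := hca
  have key : ∀ t, d ≤ t → t ≤ a → (a - t) * d ^ q + (t - d) * a ^ q ≤ (a - d) * t ^ q := by
    intro t h1 h2
    have h3 := hconc.2 (Set.mem_Ici.2 hd) (Set.mem_Ici.2 (by linarith : 0 ≤ a))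
      (div_nonneg (a := a - t) (b := a - d) (by linarith) (by linarith))
      (div_nonneg (a := t - d) (b := a - d) (by linarith) (by linarith))
      (by rw [← add_div]; rw [div_eq_one_iff_eq (by linarith)]; ring)
    have e : (a - t) / (a - d) * d + (t - d) / (a - d) * a = t := by
      have : a - d ≠ 0 := by linarith
      field_simp; ring
    simp only [smul_eq_mul] at h3
    rw [e] at h3
    have h4 : (a - t) / (a - d) * d ^ q + (t - d) / (a - d) * a ^ q =
      ((a - t) * d ^ q + (t - d) * a ^ q) / (a - d) := by ring
    rw [h4, div_le_iff₀ (by linarith)] at h3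
    linarith
  have hb := key b hbd hba
  have hc := key c hdc hca
  have hmono : d ^ q ≤ a ^ q := rpow_le_rpow hd h.le hq.le
  have : (a - d) * (a ^ q + d ^ q) ≤ (a - d) * (b ^ q + c ^ q) := by nlinarith
  exact le_of_mul_le_mul_left this (by linarith)

theorem cosGapSum_six_fifths_le {q : ℝ} (hq : 0 < q) (hq1 : q ≤ 1) :
    cosGapSum (2 * q) (6 / 5) ≤ negLogCosSq (6 / 5) ^ (-q) := by
  have hlt : (6 / 5 : ℝ) < π / 2 := by linarith [pi_gt_three]
  rw [cosGapSum_eq (by linarith) (by norm_num) hlt]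
  have h1 : rpowGap (2 * q) π (6 / 5) ≤ gapSum (2 * q) (6 / 5) := by
    have := (summable_rpowGap (p := 2 * q) (by linarith) (by norm_num) hlt).le_tsum 0
      (fun k _ => rpowGap_nonneg (by linarith) (by norm_num) (lt_natCast_add_one_mul_pi hlt k))
    simpa [gapSum] using this
  have conv : ∀ t : ℝ, 0 ≤ t → t ^ (-(2 * q)) = ((t ^ 2)⁻¹) ^ q := by
    intro t ht
    rw [rpow_neg ht, inv_rpow (by positivity), rpow_mul ht]; norm_cast
  have hT2 := two_le_negLogCosSq le_rfl hlt
  have hT := negLogCosSq_six_fifths_le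
  have hp1 := pi_gt_d4
  have hp2 := pi_lt_d4
  have h2 : negLogCosSq (6 / 5) ^ (-q) = ((negLogCosSq (6 / 5))⁻¹) ^ q := by
    rw [rpow_neg (by linarith), inv_rpow (by linarith)]
  rw [rpowGap, conv _ (by linarith), conv _ (by linarith)] at h1
  rw [conv _ (by norm_num), h2]
  have c1 : ((π - 6 / 5) ^ 2)⁻¹ ≤ 1 / 3 := by
    rw [inv_le_comm₀ (by nlinarith) (by norm_num)]; nlinarith
  have c2 : 265 / 1000 ≤ ((π - 6 / 5) ^ 2)⁻¹ := by
    rw [le_inv_comm₀ (by norm_num) (by nlinarith)]; nlinarith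
  have d1 : ((π + 6 / 5) ^ 2)⁻¹ ≤ 532 / 10000 := by
    rw [inv_le_comm₀ (by nlinarith) (by norm_num)]; nlinarith
  have t1 : 483 / 1000 ≤ (negLogCosSq (6 / 5))⁻¹ := by
    rw [le_inv_comm₀ (by norm_num) (by linarith)]; linarith
  have t2 : (negLogCosSq (6 / 5))⁻¹ ≤ 1 / 2 := by
    rw [inv_le_comm₀ (by linarith) (by norm_num)]; linarith
  have := rpow_add_rpow_le (q := q) (a := ((6 / 5 : ℝ) ^ 2)⁻¹) (b := (negLogCosSq (6 / 5))⁻¹)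
    (c := ((π - 6 / 5) ^ 2)⁻¹) (d := ((π + 6 / 5) ^ 2)⁻¹) hq hq1 (by positivity) (by linarith)
    (by linarith) (by norm_num; linarith) (by norm_num; linarith) (by norm_num; linarith)
  linarith

theorem rpow_negLogCosSq_div_le {q x y : ℝ} (hq : 0 < q) (hq1 : q ≤ 1) (hx : 6 / 5 ≤ x)
    (hxy : x ≤ y) (hy : y < π / 2) :
    negLogCosSq x ^ (-q) / (π / 2 - x) ≤ negLogCosSq y ^ (-q) / (π / 2 - y) := by
  have hd : ∀ x, 6 / 5 ≤ x → x < π / 2 → HasDerivAt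
      (fun x => negLogCosSq x ^ (-q) / (π / 2 - x))
      (((2 * tan x * (-q) * negLogCosSq x ^ (-q - 1)) * (π / 2 - x) -
        negLogCosSq x ^ (-q) * (-1)) / (π / 2 - x) ^ 2) x := by
    intro x hx hx'
    have hT := two_le_negLogCosSq hx hx'
    exact ((hasDerivAt_negLogCosSq (by linarith) hx').rpow_const (Or.inl (by linarith))).div
      ((hasDerivAt_id' x).const_sub _) (by linarith)
  have hmono : MonotoneOn (fun x => negLogCosSq x ^ (-q) / (π / 2 - x))
      (Set.Ico (6 / 5) (π / 2)) := by
    apply monotoneOn_of_deriv_nonneg (convex_Ico _ _)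
    · exact fun y hy => (hd y hy.1 hy.2).continuousAt.continuousWithinAt
    · intro y hy
      rw [interior_Ico] at hy
      exact (hd y hy.1.le hy.2).differentiableAt.differentiableWithinAt
    · intro y hy
      rw [interior_Ico] at hy
      rw [(hd y hy.1.le hy.2).deriv]
      apply div_nonneg _ (sq_nonneg _)
      have hT := two_le_negLogCosSq hy.1.le hy.2
      have hy0 : 0 < π / 2 - y := by linarith [hy.2]
      have h1 : tan y * (π / 2 - y) ≤ 1 := by
        have h2 := le_tan hy0.le (by linarith [hy.1])
        rw [tan_pi_div_two_sub] at h2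
        have h3 : 0 < tan y := tan_pos_of_pos_of_lt_pi_div_two (by linarith [hy.1]) hy.2
        calc tan y * (π / 2 - y) ≤ tan y * (tan y)⁻¹ := by gcongr
          _ = 1 := mul_inv_cancel₀ h3.ne'
      rw [rpow_sub_one (by linarith)]
      have e : 0 < negLogCosSq y ^ (-q) := rpow_pos_of_pos (by linarith) _
      have h5 : 2 * q * (tan y * (π / 2 - y)) / negLogCosSq y ≤ 1 := by
        rw [div_le_one (by linarith)]; nlinarith
      have := mul_le_mul_of_nonneg_left h5 e.le
      have e6 : 2 * tan y * -q * (negLogCosSq y ^ (-q) / negLogCosSq y) * (π / 2 - y) -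
        negLogCosSq y ^ (-q) * -1 = negLogCosSq y ^ (-q) - negLogCosSq y ^ (-q) *
        (2 * q * (tan y * (π / 2 - y)) / negLogCosSq y) := by ring
      rw [e6]; linarith
  exact hmono ⟨hx, by linarith⟩ ⟨by linarith, hy⟩ hxy

/-- Once the sum `cosGapSum` drops below its Gaussian counterpart, it stays below. -/
theorem cosGapSum_le_of_le {q x y : ℝ} (hq : 9 / 10 ≤ q) (hq1 : q ≤ 1) (hx : 0 < x)
    (hxy : x ≤ y) (hy : y < π / 2) (h : cosGapSum (2 * q) x ≤ negLogCosSq x ^ (-q)) :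
    cosGapSum (2 * q) y ≤ negLogCosSq y ^ (-q) := by
  have hlt : (6 / 5 : ℝ) < π / 2 := by linarith [pi_gt_three]
  rcases le_or_gt y (6 / 5) with hy' | hy'
  · rw [cosGapSum_eq (by linarith) hx (by linarith)] at h
    rw [cosGapSum_eq (by linarith) (by linarith) hy]
    have h1 := antitoneOn_rpow_sub_div hq hq1 ⟨hx, by linarith⟩ ⟨by linarith, hy'⟩ hxy
    have h2 := gapSum_div_le (p := 2 * q) (by linarith) hx hxy hy
    have h3 : (x ^ (-(2 * q)) - negLogCosSq x ^ (-q)) / x ≤ gapSum (2 * q) x / x := by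
      gcongr; linarith
    have h4 := (h1.trans h3).trans h2
    simp only at h4
    rw [div_le_div_iff_of_pos_right (by linarith)] at h4
    linarith
  · have h1 := cosGapSum_six_fifths_le (q := q) (by linarith) hq1
    have h2 := cosGapSum_div_le (p := 2 * q) (by linarith) (by norm_num) hy'.le hy
    have h3 := rpow_negLogCosSq_div_le (by linarith) hq1 le_rfl hy'.le hy
    have h4 : cosGapSum (2 * q) (6 / 5) / (π / 2 - 6 / 5) ≤
        negLogCosSq (6 / 5) ^ (-q) / (π / 2 - 6 / 5) :=
      div_le_div_of_nonneg_right h1 (by linarith)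
    have h5 := (h2.trans h4).trans h3
    rwa [div_le_div_iff_of_pos_right (by linarith)] at h5

/-- An integrated comparison between functions `F` and `G` with a single crossing is preserved by
an antitone weight. -/
theorem lintegral_mul_antitone_le {F G w ρ : ℝ → ENNReal}
    (hF : Measurable F) (hG : Measurable G) (hw : Measurable w) (hρ : Measurable ρ)
    (hcross : ∀ t ∈ Set.Ioo (0 : ℝ) 1, ∀ t' ∈ Set.Ioo (0 : ℝ) 1, t ≤ t' → F t ≤ G t → F t' ≤ G t')
    (hanti : AntitoneOn ρ (Set.Icc 0 1)) (hfin : ρ 0 ≠ ⊤)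
    (h_int : ∫⁻ t in Set.Ioo (0 : ℝ) 1, F t * w t ≠ ⊤)
    (h : ∫⁻ t in Set.Ioo (0 : ℝ) 1, G t * w t ≤ ∫⁻ t in Set.Ioo (0 : ℝ) 1, F t * w t) :
    ∫⁻ t in Set.Ioo (0 : ℝ) 1, G t * w t * ρ t ≤ ∫⁻ t in Set.Ioo (0 : ℝ) 1, F t * w t * ρ t := by
  obtain ⟨t₀, ht₀, hlt, hgt⟩ : ∃ t₀ ∈ Set.Icc (0 : ℝ) 1,
      (∀ t ∈ Set.Ioo (0 : ℝ) 1, t < t₀ → G t ≤ F t) ∧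
      (∀ t ∈ Set.Ioo (0 : ℝ) 1, t₀ < t → F t ≤ G t) := by
    let S := {t | t ∈ Set.Ioo (0 : ℝ) 1 ∧ F t ≤ G t}
    rcases S.eq_empty_or_nonempty with hS | hS
    · refine ⟨1, by simp, fun t ht _ => ?_, fun t ht h1 => absurd ht.2 (not_lt.2 h1.le)⟩
      by_contra hc
      exact Set.eq_empty_iff_forall_notMem.1 hS t ⟨ht, (not_le.1 hc).le⟩
    · have hb : BddBelow S := ⟨0, fun t ht => ht.1.1.le⟩
      obtain ⟨u, hu⟩ := hS
      refine ⟨sInf S, ⟨le_csInf ⟨u, hu⟩ fun t ht => ht.1.1.le,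
        (csInf_le hb hu).trans hu.1.2.le⟩, fun t ht h1 => ?_, fun t ht h1 => ?_⟩
      · by_contra hc
        exact absurd (csInf_le hb (show t ∈ S from ⟨ht, (not_le.1 hc).le⟩)) (not_le.2 h1)
      · obtain ⟨v, hv, hvt⟩ := exists_lt_of_csInf_lt ⟨u, hu⟩ h1
        exact hcross v hv.1 t ht hvt.le hv.2
  set c := ρ t₀ with hc
  have hcfin : c ≠ ⊤ := ne_top_of_le_ne_top hfin (hanti (by simp) ht₀ ht₀.1)
  have hpt : ∀ t ∈ Set.Ioo (0 : ℝ) 1,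
      G t * w t * ρ t + c * (F t * w t) ≤ F t * w t * ρ t + c * (G t * w t) := by
    intro t ht
    have ht' := Set.Ioo_subset_Icc_self ht
    rcases lt_trichotomy t t₀ with h1 | h1 | h1
    · obtain ⟨d, hd⟩ := exists_add_of_le (hanti ht' ht₀ h1.le)
      have hGF := hlt t ht h1
      rw [hd, ← hc, mul_add, mul_add, mul_comm c (F t * w t), mul_comm c (G t * w t)]
      calc _ = (G t * w t * c + F t * w t * c) + G t * w t * d := by ring
        _ ≤ (G t * w t * c + F t * w t * c) + F t * w t * d := by gcongr
        _ = _ := by ring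
    · rw [h1, ← hc]; apply le_of_eq; ring
    · obtain ⟨d, hd⟩ := exists_add_of_le (hanti ht₀ ht' h1.le)
      have hFG := hgt t ht h1
      rw [← hc] at hd
      rw [hd]
      calc _ = (G t * w t * ρ t + F t * w t * ρ t) + F t * w t * d := by ring
        _ ≤ (G t * w t * ρ t + F t * w t * ρ t) + G t * w t * d := by gcongr
        _ = _ := by ring
  have hsum := setLIntegral_mono (μ := volume)
    (by fun_prop : Measurable fun t => F t * w t * ρ t + c * (G t * w t)) hpt
  rw [lintegral_add_left (by fun_prop), lintegral_add_left (by fun_prop),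
    lintegral_const_mul _ (by fun_prop), lintegral_const_mul _ (by fun_prop)] at hsum
  have hle : c * ∫⁻ t in Set.Ioo (0 : ℝ) 1, G t * w t ≤
    c * ∫⁻ t in Set.Ioo (0 : ℝ) 1, F t * w t := by
    gcongr
  refine (ENNReal.add_le_add_iff_right (a := c * ∫⁻ t in Set.Ioo (0 : ℝ) 1, F t * w t)
    (ENNReal.mul_ne_top hcfin h_int)).1 (hsum.trans ?_)
  gcongr

theorem lintegral_one_sub_rpow {α : Type*} [MeasurableSpace α] (μ : Measure α) {f : α → ℝ}
    (hf : Measurable f) (hf0 : ∀ x, 0 ≤ f x) (hf1 : ∀ x, f x ≤ 1) {s : ℝ} (hs : 2 ≤ s) :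
    ∫⁻ x, ENNReal.ofReal (1 - f x ^ s) ∂μ = ∫⁻ t in Set.Ioo (0 : ℝ) 1,
      μ {x | t < 1 - f x} * ENNReal.ofReal (2 * (1 - t)) *
        ENNReal.ofReal (s / 2 * (1 - t) ^ (s - 2)) := by
  have h1 := lintegral_comp_eq_lintegral_meas_lt_mul μ (f := fun x => 1 - f x)
    (g := fun t => s * |1 - t| ^ (s - 1)) (ae_of_all _ fun x => by simpa using hf1 x)
    (by fun_prop) (fun t _ => by
      apply Continuous.intervalIntegrable
      have hs1 : 0 ≤ s - 1 := by linarith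
      fun_prop (disch := assumption)) (ae_of_all _ fun t => by positivity)
  have h2 : ∀ x, ∫ t in (0 : ℝ)..(1 - f x), s * |1 - t| ^ (s - 1) = 1 - f x ^ s := by
    intro x
    rw [intervalIntegral.integral_eq_sub_of_hasDerivAt_of_le (f := fun t => -(1 - t) ^ s)
      (by linarith [hf1 x])]
    · simp; ring
    · apply Continuous.continuousOn
      have : Continuous fun x : ℝ => x ^ s :=
        continuous_id.rpow_const fun x => Or.inr (by linarith)
      fun_prop
    · intro t ht
      rw [abs_of_nonneg (by linarith [ht.2, hf0 x])]
      exact (((hasDerivAt_id' t).const_sub 1).rpow_const (p := s)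
        (Or.inr (by linarith))).neg.congr_deriv (by ring)
    · apply Continuous.intervalIntegrable
      have hs1 : 0 ≤ s - 1 := by linarith
      fun_prop (disch := assumption)
  simp only [h2] at h1
  rw [h1, show Set.Ioi (0 : ℝ) = Set.Ioo 0 1 ∪ Set.Ici 1 from
    (Set.Ioo_union_Ici_eq_Ioi one_pos).symm, lintegral_union measurableSet_Ici
    (Set.disjoint_left.2 fun t ht ht' => absurd ht.2 (not_lt.2 ht'))]
  rw [setLIntegral_congr_fun (g := fun _ => 0) measurableSet_Ici (fun t ht => by
    have : {x | t < 1 - f x} = ∅ := by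
      ext x; simp only [Set.mem_ofPred_eq, Set.mem_empty_iff_false, iff_false, not_lt]
      have := Set.mem_Ici.1 ht
      linarith [hf0 x]
    simp [this])]
  simp only [lintegral_zero, add_zero]
  refine setLIntegral_congr_fun measurableSet_Ioo fun t ht => ?_
  have ht1 : 0 < 1 - t := by linarith [ht.2]
  rw [mul_assoc, ← ENNReal.ofReal_mul (by positivity), abs_of_pos ht1]
  congr 2
  rw [show s - 1 = (s - 2) + 1 by ring, rpow_add_one ht1.ne']
  ring

/-- If the distribution functions of `1 - f` and `1 - g` cross only once, then a comparison of
second moments propagates to higher moments. -/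
theorem lintegral_one_sub_rpow_le {α : Type*} [MeasurableSpace α] {μ : Measure α} {f g : α → ℝ}
    (hf : Measurable f) (hf0 : ∀ x, 0 ≤ f x) (hf1 : ∀ x, f x ≤ 1)
    (hg : Measurable g) (hg0 : ∀ x, 0 ≤ g x) (hg1 : ∀ x, g x ≤ 1)
    (hcross : ∀ t ∈ Set.Ioo (0 : ℝ) 1, ∀ t' ∈ Set.Ioo (0 : ℝ) 1, t ≤ t' →
      μ {x | t < 1 - f x} ≤ μ {x | t < 1 - g x} → μ {x | t' < 1 - f x} ≤ μ {x | t' < 1 - g x})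
    (hfin : ∫⁻ x, ENNReal.ofReal (1 - f x ^ (2 : ℝ)) ∂μ ≠ ⊤)
    (h2 : ∫⁻ x, ENNReal.ofReal (1 - g x ^ (2 : ℝ)) ∂μ ≤ ∫⁻ x, ENNReal.ofReal (1 - f x ^ (2 : ℝ)) ∂μ)
    {s : ℝ} (hs : 2 ≤ s) :
    ∫⁻ x, ENNReal.ofReal (1 - g x ^ s) ∂μ ≤ ∫⁻ x, ENNReal.ofReal (1 - f x ^ s) ∂μ := by
  rw [lintegral_one_sub_rpow μ hf hf0 hf1 le_rfl] at hfin
  rw [lintegral_one_sub_rpow μ hf hf0 hf1 le_rfl, lintegral_one_sub_rpow μ hg hg0 hg1 le_rfl] at h2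
  rw [lintegral_one_sub_rpow μ hf hf0 hf1 hs, lintegral_one_sub_rpow μ hg hg0 hg1 hs]
  simp only [sub_self, rpow_zero, mul_one, div_self (two_ne_zero' ℝ), ENNReal.ofReal_one]
    at hfin h2
  have hm : ∀ u : α → ℝ, Measurable fun t : ℝ => μ {x | t < u x} := fun u =>
    Antitone.measurable fun t t' htt' => measure_mono fun x hx => lt_of_le_of_lt htt' hx
  refine lintegral_mul_antitone_le (hm _) (hm _) (by fun_prop) (by fun_prop) hcross ?_
    ENNReal.ofReal_ne_top hfin h2
  intro t ht t' ht' htt'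
  apply ENNReal.ofReal_le_ofReal
  have : (1 - t') ^ (s - 2) ≤ (1 - t) ^ (s - 2) :=
    rpow_le_rpow (by linarith [ht'.2]) (by linarith) (by linarith)
  gcongr

/-- The measure on `(0, ∞)` with density `x ^ (-p - 1)`. -/
noncomputable def powMeasure (p : ℝ) : Measure ℝ :=
  (volume.restrict (Set.Ioi 0)).withDensity fun x => ENNReal.ofReal (x ^ (-p - 1))

theorem lintegral_powMeasure (p : ℝ) {f : ℝ → ENNReal} (hf : Measurable f) :
    ∫⁻ x, f x ∂powMeasure p = ∫⁻ x in Set.Ioi 0, ENNReal.ofReal (x ^ (-p - 1)) * f x :=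
  lintegral_withDensity_eq_lintegral_mul _ (by fun_prop) hf

theorem powMeasure_apply (p : ℝ) {A B : Set ℝ} (hA : MeasurableSet A) (hB : A ∩ Set.Ioi 0 = B) :
    powMeasure p A = ∫⁻ x in B, ENNReal.ofReal (x ^ (-p - 1)) := by
  rw [powMeasure, withDensity_apply _ hA, Measure.restrict_restrict hA, hB]

theorem lintegral_Ioo_rpow {p a b : ℝ} (hp : 0 < p) (ha : 0 < a) (hab : a ≤ b) :
    ∫⁻ x in Set.Ioo a b, ENNReal.ofReal (x ^ (-p - 1)) =
      ENNReal.ofReal ((a ^ (-p) - b ^ (-p)) / p) := by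
  have hz : (0 : ℝ) ∉ Set.uIcc a b := by
    rw [Set.uIcc_of_le hab]; exact fun h => absurd h.1 (not_le.2 ha)
  have hi : IntegrableOn (fun x : ℝ => x ^ (-p - 1)) (Set.Ioc a b) :=
    (intervalIntegrable_iff_integrableOn_Ioc_of_le hab).1
      (intervalIntegral.intervalIntegrable_rpow (Or.inr hz))
  rw [Measure.restrict_congr_set Ioo_ae_eq_Ioc, ← ofReal_integral_eq_lintegral_ofReal hi,
    ← intervalIntegral.integral_of_le hab, integral_rpow (Or.inr ⟨by linarith, hz⟩)]
  · congr 1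
    rw [show -p - 1 + 1 = -p by ring, div_neg, ← neg_div, neg_sub]
  · filter_upwards [ae_restrict_mem measurableSet_Ioc] with x hx
    exact rpow_nonneg (ha.trans hx.1).le _

theorem lintegral_Ioi_rpow {p a : ℝ} (hp : 0 < p) (ha : 0 < a) :
    ∫⁻ x in Set.Ioi a, ENNReal.ofReal (x ^ (-p - 1)) = ENNReal.ofReal (a ^ (-p) / p) := by
  rw [← ofReal_integral_eq_lintegral_ofReal (integrableOn_Ioi_rpow_of_lt (by linarith) ha),
    integral_Ioi_rpow_of_lt (by linarith) ha]
  · congr 1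
    rw [show -p - 1 + 1 = -p by ring, div_neg, ← neg_div, neg_neg]
  · filter_upwards [ae_restrict_mem measurableSet_Ioi] with x hx
    exact rpow_nonneg (ha.trans hx).le _

theorem setOf_abs_cos_lt_inter_Ioi {θ : ℝ} (h0 : 0 < θ) (h1 : θ < π / 2) :
    {x | |cos x| < cos θ} ∩ Set.Ioi 0 = ⋃ k : ℕ, Set.Ioo (k * π + θ) ((k + 1) * π - θ) := by
  have habs : ∀ (y : ℝ) (k : ℕ), |cos (y + k * π)| = |cos y| := by
    intro y k
    rw [cos_add_nat_mul_pi, abs_mul, abs_pow]; simp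
  have key : ∀ y, 0 ≤ y → y ≤ π → (|cos y| < cos θ ↔ θ < y ∧ y < π - θ) := by
    intro y hy hy'
    have e := strictAntiOn_cos.lt_iff_gt (a := y) (b := θ) ⟨hy, hy'⟩ ⟨h0.le, by linarith⟩
    have e' := strictAntiOn_cos.lt_iff_gt (a := π - y) (b := θ) ⟨by linarith, by linarith⟩
      ⟨h0.le, by linarith⟩
    rw [cos_pi_sub] at e'
    rw [abs_lt, neg_lt, e, e']
    constructor <;> rintro ⟨_, _⟩ <;> constructor <;> linarith
  ext x
  simp only [Set.mem_inter_iff, Set.mem_ofPred_eq, Set.mem_Ioi, Set.mem_iUnion, Set.mem_Ioo]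
  constructor
  · rintro ⟨hx, hx0⟩
    refine ⟨⌊x / π⌋₊, ?_⟩
    have f1 := Nat.floor_le (div_nonneg hx0.le pi_pos.le)
    have f2 := Nat.lt_floor_add_one (x / π)
    rw [le_div_iff₀ pi_pos] at f1
    rw [div_lt_iff₀ pi_pos] at f2
    have e := habs (x - ⌊x / π⌋₊ * π) ⌊x / π⌋₊
    rw [sub_add_cancel] at e
    rw [e, key _ (by linarith) (by linarith)] at hx
    exact ⟨by linarith [hx.1], by linarith [hx.2]⟩
  · rintro ⟨k, hk, hk'⟩
    have e := habs (x - k * π) k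
    rw [sub_add_cancel] at e
    refine ⟨?_, ?_⟩
    · rw [e, key _ (by linarith) (by linarith)]
      exact ⟨by linarith, by linarith⟩
    · have : (0 : ℝ) ≤ k * π := by positivity
      linarith

theorem powMeasure_abs_cos_lt {p θ : ℝ} (hp : 0 < p) (h0 : 0 < θ) (h1 : θ < π / 2) :
    powMeasure p {x | |cos x| < cos θ} = ENNReal.ofReal (cosGapSum p θ / p) := by
  have hm : MeasurableSet {x | |cos x| < cos θ} := measurableSet_lt (by fun_prop) (by fun_prop)
  rw [powMeasure_apply p hm (setOf_abs_cos_lt_inter_Ioi h0 h1),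
    lintegral_iUnion (fun _ => measurableSet_Ioo)]
  · have hs := (hasSum_cosGapSum hp h0 h1).summable
    rw [cosGapSum, ← tsum_div_const, ENNReal.ofReal_tsum_of_nonneg _ (hs.div_const p)]
    · refine tsum_congr fun k => ?_
      have : (0 : ℝ) ≤ k * π := by positivity
      rw [lintegral_Ioo_rpow hp (by linarith) (by linarith), rpowGap,
        show ((k : ℝ) + 1 / 2) * π - (π / 2 - θ) = k * π + θ by ring,
        show ((k : ℝ) + 1 / 2) * π + (π / 2 - θ) = (k + 1) * π - θ by ring]
    · exact fun k => div_nonneg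
        (rpowGap_nonneg hp (by linarith) (pi_div_two_sub_lt h0 k)) hp.le
  · have hmono : Monotone fun k : ℕ => (k : ℝ) * π := fun a b hab => by
      simp only; gcongr
    refine pairwise_disjoint_on _ |>.2 fun i j hij => ?_
    have : ((i : ℝ) + 1) * π ≤ j * π := by
      gcongr; exact_mod_cast hij
    exact Set.disjoint_left.2 fun x hx hx' => by linarith [hx.2, hx'.1]

theorem powMeasure_exp_lt {p θ : ℝ} (hp : 0 < p) (h0 : 0 < θ) (h1 : θ < π / 2) :
    powMeasure p {x | exp (-(x ^ 2 / 2)) < cos θ} =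
      ENNReal.ofReal (negLogCosSq θ ^ (-(p / 2)) / p) := by
  have hT := negLogCosSq_pos h0 h1
  have hc := cos_pos_of_nonneg_of_lt h0.le h1
  have hm : MeasurableSet {x | exp (-(x ^ 2 / 2)) < cos θ} :=
    measurableSet_lt (by fun_prop) (by fun_prop)
  rw [powMeasure_apply p hm (B := Set.Ioi (√(negLogCosSq θ))),
    lintegral_Ioi_rpow hp (sqrt_pos.2 hT)]
  · rw [sqrt_eq_rpow, ← rpow_mul hT.le]; ring_nf
  · ext x
    simp only [Set.mem_inter_iff, Set.mem_ofPred_eq, Set.mem_Ioi]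
    rw [← lt_log_iff_exp_lt hc]
    constructor
    · rintro ⟨hx, hx0⟩
      rw [sqrt_lt' hx0, negLogCosSq]; linarith
    · intro hx
      have hx0 : 0 < x := (sqrt_nonneg _).trans_lt hx
      rw [sqrt_lt' hx0, negLogCosSq] at hx
      exact ⟨by linarith, hx0⟩

theorem powMeasure_crossing {p : ℝ} (hp : 9 / 5 ≤ p) (hp2 : p < 2) :
    ∀ t ∈ Set.Ioo (0 : ℝ) 1, ∀ t' ∈ Set.Ioo (0 : ℝ) 1, t ≤ t' →
      powMeasure p {x | t < 1 - |cos x|} ≤ powMeasure p {x | t < 1 - exp (-(x ^ 2 / 2))} →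
      powMeasure p {x | t' < 1 - |cos x|} ≤ powMeasure p {x | t' < 1 - exp (-(x ^ 2 / 2))} := by
  have hset : ∀ (f : ℝ → ℝ) (t : ℝ), {x | t < 1 - f x} = {x | f x < 1 - t} := fun f t => by
    ext x; simp only [Set.mem_ofPred_eq]; constructor <;> intro h <;> linarith
  have hang : ∀ t ∈ Set.Ioo (0 : ℝ) 1,
      0 < arccos (1 - t) ∧ arccos (1 - t) < π / 2 ∧ cos (arccos (1 - t)) = 1 - t := fun t ht =>
    ⟨arccos_pos.2 (by linarith [ht.1]), arccos_lt_pi_div_two.2 (by linarith [ht.2]),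
      cos_arccos (by linarith [ht.2]) (by linarith [ht.1])⟩
  have hiff : ∀ t ∈ Set.Ioo (0 : ℝ) 1,
      (powMeasure p {x | t < 1 - |cos x|} ≤ powMeasure p {x | t < 1 - exp (-(x ^ 2 / 2))} ↔
        cosGapSum (2 * (p / 2)) (arccos (1 - t)) ≤ negLogCosSq (arccos (1 - t)) ^ (-(p / 2))) := by
    intro t ht
    obtain ⟨h1, h2, h3⟩ := hang t ht
    have hT := negLogCosSq_pos h1 h2
    rw [hset fun x => |cos x|, hset fun x => exp (-(x ^ 2 / 2)), ← h3,
      powMeasure_abs_cos_lt (by linarith) h1 h2, powMeasure_exp_lt (by linarith) h1 h2,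
      ENNReal.ofReal_le_ofReal_iff (by positivity), h3, div_le_div_iff_of_pos_right (by linarith),
      mul_div_cancel₀ p (two_ne_zero' ℝ)]
  intro t ht t' ht' htt' h
  rw [hiff t ht] at h
  rw [hiff t' ht']
  exact cosGapSum_le_of_le (by linarith) (by linarith) (hang t ht).1
    (arccos_le_arccos (by linarith)) (hang t' ht').2.1 h

theorem lintegral_powMeasure_comp_mul (p : ℝ) {u : ℝ} (hu : 0 < u) {f : ℝ → ENNReal}
    (hf : Measurable f) :
    ∫⁻ x, f (u * x) ∂powMeasure p = ENNReal.ofReal (u ^ p) * ∫⁻ x, f x ∂powMeasure p := by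
  rw [lintegral_powMeasure p (f := fun x => f (u * x)) (hf.comp (measurable_const_mul u)),
    lintegral_powMeasure p hf,
    ← lintegral_indicator measurableSet_Ioi, ← lintegral_indicator measurableSet_Ioi]
  set h : ℝ → ENNReal := (Set.Ioi 0).indicator fun x => ENNReal.ofReal (x ^ (-p - 1)) * f x with hh
  have hm : Measurable h := Measurable.indicator (by fun_prop) measurableSet_Ioi
  have e1 : ∫⁻ x, h (u * x) = ENNReal.ofReal u⁻¹ * ∫⁻ x, h x := by
    rw [← lintegral_map hm (measurable_const_mul u), Real.map_volume_mul_left hu.ne',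
      lintegral_smul_measure, abs_of_pos (inv_pos.2 hu), smul_eq_mul]
  have e2 : (∫⁻ x, (Set.Ioi 0).indicator (fun x => ENNReal.ofReal (x ^ (-p - 1)) * f (u * x)) x) =
      ∫⁻ x, ENNReal.ofReal (u ^ (p + 1)) * h (u * x) := by
    refine lintegral_congr fun x => ?_
    by_cases hx : 0 < x
    · rw [Set.indicator_of_mem (Set.mem_Ioi.2 hx), hh,
        Set.indicator_of_mem (Set.mem_Ioi.2 (mul_pos hu hx)), ← mul_assoc,
        ← ENNReal.ofReal_mul (by positivity), mul_rpow hu.le hx.le, ← mul_assoc, ← rpow_add hu]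
      rw [show p + 1 + (-p - 1) = 0 by ring, rpow_zero, one_mul]
    · rw [Set.indicator_of_notMem (by simpa using hx), hh, Set.indicator_of_notMem, mul_zero]
      simp only [Set.mem_Ioi, not_lt] at hx ⊢
      exact mul_nonpos_of_nonneg_of_nonpos hu.le hx
  have hm' : Measurable fun x => h (u * x) := hm.comp (measurable_const_mul u)
  rw [e2, lintegral_const_mul _ hm', e1, ← mul_assoc,
    ← ENNReal.ofReal_mul (by positivity), rpow_add_one hu.ne', mul_assoc, mul_inv_cancel₀ hu.ne',
    mul_one]

/-- The integral of `1 - cos` against `powMeasure p`. -/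
noncomputable def cosMoment (p : ℝ) : ENNReal :=
  ∫⁻ x, ENNReal.ofReal (1 - cos x) ∂powMeasure p

theorem cosMoment_ne_top {p : ℝ} (hp : 0 < p) (hp2 : p < 2) : cosMoment p ≠ ⊤ := by
  rw [cosMoment, lintegral_powMeasure p (by fun_prop),
    show Set.Ioi (0 : ℝ) = Set.Ioc 0 1 ∪ Set.Ioi 1 from (Set.Ioc_union_Ioi_eq_Ioi zero_le_one).symm]
  refine ne_top_of_le_ne_top ?_ (lintegral_union_le _ _ _)
  refine ENNReal.add_ne_top.2 ⟨?_, ?_⟩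
  · have hi : IntegrableOn (fun x : ℝ => x ^ (1 - p)) (Set.Ioc 0 1) :=
      (intervalIntegrable_iff_integrableOn_Ioc_of_le zero_le_one).1
        (intervalIntegral.intervalIntegrable_rpow' (by linarith))
    refine ne_top_of_le_ne_top hi.lintegral_lt_top.ne
      (setLIntegral_mono (by fun_prop) fun x hx => ?_)
    rw [← ENNReal.ofReal_mul (rpow_nonneg hx.1.le _)]
    apply ENNReal.ofReal_le_ofReal
    have h1 : 1 - cos x ≤ x ^ 2 := by nlinarith [one_sub_sq_div_two_le_cos (x := x)]
    calc x ^ (-p - 1) * (1 - cos x) ≤ x ^ (-p - 1) * x ^ 2 := by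
          have := rpow_nonneg hx.1.le (-p - 1); gcongr
      _ = x ^ (1 - p) := by rw [← rpow_natCast, ← rpow_add hx.1]; ring_nf
  · have hi : IntegrableOn (fun x : ℝ => x ^ (-p - 1) * 2) (Set.Ioi 1) :=
      (integrableOn_Ioi_rpow_of_lt (by linarith) one_pos).mul_const 2
    refine ne_top_of_le_ne_top hi.lintegral_lt_top.ne
      (setLIntegral_mono (by fun_prop) fun x hx => ?_)
    have hx0 : 0 ≤ x := zero_le_one.trans (Set.mem_Ioi.1 hx).le
    rw [← ENNReal.ofReal_mul (rpow_nonneg hx0 _)]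
    apply ENNReal.ofReal_le_ofReal
    exact mul_le_mul_of_nonneg_left (by linarith [neg_one_le_cos x]) (rpow_nonneg hx0 _)

theorem cosMoment_ne_zero {p : ℝ} (hp : 0 < p) : cosMoment p ≠ 0 := by
  have h1 : ENNReal.ofReal (1 - cos 1) * powMeasure p (Set.Ioo 1 2) ≤ cosMoment p := by
    rw [cosMoment, ← setLIntegral_const]
    refine (setLIntegral_mono' measurableSet_Ioo fun x hx => ?_).trans
      (setLIntegral_le_lintegral _ _)
    apply ENNReal.ofReal_le_ofReal
    have := cos_le_cos_of_nonneg_of_le_pi zero_le_one (by linarith [pi_gt_three, hx.2]) hx.1.le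
    linarith
  have h2 : powMeasure p (Set.Ioo 1 2) = ENNReal.ofReal ((1 ^ (-p) - 2 ^ (-p)) / p) := by
    rw [powMeasure_apply p measurableSet_Ioo (B := Set.Ioo 1 2)
      (Set.inter_eq_left.2 fun x hx => by have := hx.1; simp only [Set.mem_Ioi]; linarith),
      lintegral_Ioo_rpow hp one_pos one_le_two]
  have h3 : cos 1 < 1 := by
    have := cos_lt_cos_of_nonneg_of_le_pi le_rfl (by linarith [pi_gt_three] : (1 : ℝ) ≤ π) one_pos
    simpa using this
  have h4 : (2 : ℝ) ^ (-p) < 1 := rpow_lt_one_of_one_lt_of_neg one_lt_two (by linarith)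
  intro h0
  rw [h0, h2, ← ENNReal.ofReal_mul (by linarith), nonpos_iff_eq_zero, ENNReal.ofReal_eq_zero,
    one_rpow] at h1
  have : 0 < (1 - cos 1) * ((1 - 2 ^ (-p)) / p) := by
    have := sub_pos.2 h3; have := sub_pos.2 h4; positivity
  linarith

theorem lintegral_one_sub_cos_mul {p : ℝ} (hp : 0 < p) (u : ℝ) :
    ∫⁻ x, ENNReal.ofReal (1 - cos (u * x)) ∂powMeasure p =
      ENNReal.ofReal (|u| ^ p) * cosMoment p := by
  rcases eq_or_ne u 0 with rfl | hu
  · simp [zero_rpow hp.ne']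
  · rw [cosMoment, ← lintegral_powMeasure_comp_mul p (abs_pos.2 hu) (by fun_prop)]
    refine lintegral_congr fun x => ?_
    rcases abs_choice u with h | h <;> rw [h]
    rw [neg_mul, cos_neg]

instance sFinite_powMeasure (p : ℝ) : SFinite (powMeasure p) := by
  unfold powMeasure; infer_instance

/-- The absolute moment of order `p` of a standard Gaussian random variable. -/
noncomputable def gaussAbsMoment (p : ℝ) : ℝ := 2 ^ (p / 2) * Gamma ((p + 1) / 2) / √π

theorem gaussAbsMoment_pos {p : ℝ} (hp : 0 < p) : 0 < gaussAbsMoment p := by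
  have := Gamma_pos_of_pos (by linarith : 0 < (p + 1) / 2)
  unfold gaussAbsMoment
  positivity

theorem integral_abs_rpow_gaussianReal {p : ℝ} (hp : 0 < p) :
    ∫ y, |y| ^ p ∂ProbabilityTheory.gaussianReal 0 1 = gaussAbsMoment p := by
  rw [ProbabilityTheory.integral_gaussianReal_eq_integral_smul one_ne_zero]
  have h1 : ∀ y : ℝ, ProbabilityTheory.gaussianPDFReal 0 1 y • |y| ^ p =
      (fun x => (√(2 * π))⁻¹ * (x ^ p * exp (-(1 / 2) * x ^ (2 : ℝ)))) |y| := by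
    intro y
    simp only [ProbabilityTheory.gaussianPDFReal, smul_eq_mul, NNReal.coe_one, mul_one, sub_zero]
    rw [rpow_two, sq_abs, show -y ^ 2 / 2 = -(1 / 2) * y ^ 2 by ring]
    ring
  simp only [h1]
  rw [integral_comp_abs (f := fun x => (√(2 * π))⁻¹ * (x ^ p * exp (-(1 / 2) * x ^ (2 : ℝ)))),
    integral_const_mul, integral_rpow_mul_exp_neg_mul_rpow two_pos (by linarith) (by norm_num),
    gaussAbsMoment, sqrt_mul two_pos.le, one_div, inv_rpow two_pos.le, ← rpow_neg two_pos.le,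
    show -(-(p + 1) / 2) = p / 2 + 1 / 2 by ring, rpow_add two_pos, ← sqrt_eq_rpow]
  field_simp

theorem lintegral_abs_rpow_gaussianReal {p : ℝ} (hp : 0 < p) :
    ∫⁻ y, ENNReal.ofReal (|y| ^ p) ∂ProbabilityTheory.gaussianReal 0 1 =
      ENNReal.ofReal (gaussAbsMoment p) := by
  rw [← integral_abs_rpow_gaussianReal hp, ofReal_integral_eq_lintegral_ofReal]
  · have h := (ProbabilityTheory.memLp_id_gaussianReal (μ := 0) (v := 1)
      p.toNNReal).integrable_norm_rpow (by simpa using hp) (by simp)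
    simpa [max_eq_left hp.le] using h
  · exact ae_of_all _ fun y => by positivity

theorem integral_one_sub_cos_gaussianReal (x : ℝ) :
    ∫ y, (1 - cos (y * x)) ∂ProbabilityTheory.gaussianReal 0 1 = 1 - exp (-(x ^ 2 / 2)) := by
  have h_int : Integrable (fun y : ℝ => Complex.exp (x * y * Complex.I))
      (ProbabilityTheory.gaussianReal 0 1) := by
    refine Integrable.of_bound (by fun_prop) 1 (ae_of_all _ fun y => ?_)
    rw [← Complex.ofReal_mul, Complex.norm_exp_ofReal_mul_I]
  have h1 := ProbabilityTheory.charFun_gaussianReal (μ := 0) (v := 1) x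
  rw [charFun_apply_real] at h1
  have h2 := congrArg Complex.re h1
  have h3 := integral_re h_int
  simp only [RCLike.re_eq_complex_re] at h3
  rw [← h3] at h2
  have h4 : ∀ y : ℝ, (Complex.exp (x * y * Complex.I)).re = cos (y * x) := by
    intro y
    rw [← Complex.ofReal_mul, Complex.exp_ofReal_mul_I_re, mul_comm]
  simp only [h4] at h2
  have h5 : (Complex.exp (x * (0 : ℝ) * Complex.I - (1 : NNReal) * x ^ 2 / 2)).re =
      exp (-(x ^ 2 / 2)) := by
    rw [← Complex.exp_ofReal_re]; congr 2; push_cast; simp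
  have h_int' : Integrable (fun y : ℝ => cos (y * x)) (ProbabilityTheory.gaussianReal 0 1) :=
    Integrable.of_bound (by fun_prop) 1 (ae_of_all _ fun y => by
      rw [norm_eq_abs]; exact abs_cos_le_one _)
  rw [integral_sub (integrable_const _) h_int', h2, h5]
  simp

theorem lintegral_one_sub_exp_powMeasure {p : ℝ} (hp : 0 < p) :
    ∫⁻ x, ENNReal.ofReal (1 - exp (-(x ^ 2 / 2))) ∂powMeasure p =
      ENNReal.ofReal (gaussAbsMoment p) * cosMoment p := by
  have h1 : ∀ x : ℝ, ENNReal.ofReal (1 - exp (-(x ^ 2 / 2))) =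
      ∫⁻ y, ENNReal.ofReal (1 - cos (y * x)) ∂ProbabilityTheory.gaussianReal 0 1 := by
    intro x
    rw [← integral_one_sub_cos_gaussianReal, ofReal_integral_eq_lintegral_ofReal]
    · refine (integrable_const _).sub
        (Integrable.of_bound (by fun_prop) 1 (ae_of_all _ fun y => ?_))
      rw [norm_eq_abs]; exact abs_cos_le_one _
    · exact ae_of_all _ fun y => sub_nonneg.2 (cos_le_one _)
  simp only [h1]
  rw [lintegral_lintegral_swap (by fun_prop)]
  simp only [lintegral_one_sub_cos_mul hp]
  rw [lintegral_mul_const _ (by fun_prop), lintegral_abs_rpow_gaussianReal hp]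

theorem lintegral_one_sub_exp_rpow_powMeasure {p s : ℝ} (hp : 0 < p) (hs : 0 < s) :
    ∫⁻ x, ENNReal.ofReal (1 - exp (-(x ^ 2 / 2)) ^ s) ∂powMeasure p =
      ENNReal.ofReal (s ^ (p / 2)) * (ENNReal.ofReal (gaussAbsMoment p) * cosMoment p) := by
  rw [← lintegral_one_sub_exp_powMeasure hp, show s ^ (p / 2) = √s ^ p by
    rw [sqrt_eq_rpow, ← rpow_mul hs.le]; ring_nf,
    ← lintegral_powMeasure_comp_mul p (sqrt_pos.2 hs)
      (f := fun x => ENNReal.ofReal (1 - exp (-(x ^ 2 / 2)))) (by fun_prop)]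
  refine lintegral_congr fun x => ?_
  rw [← exp_mul, mul_pow, sq_sqrt hs.le]
  ring_nf

theorem lintegral_one_sub_abs_cos_sq {p : ℝ} (hp : 0 < p) :
    ∫⁻ x, ENNReal.ofReal (1 - |cos x| ^ (2 : ℝ)) ∂powMeasure p =
      ENNReal.ofReal (2 ^ p / 2) * cosMoment p := by
  have h : ∀ x : ℝ, ENNReal.ofReal (1 - |cos x| ^ (2 : ℝ)) =
      ENNReal.ofReal (1 / 2) * ENNReal.ofReal (1 - cos (2 * x)) := by
    intro x
    rw [← ENNReal.ofReal_mul (by norm_num), rpow_two, sq_abs, cos_sq]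
    ring_nf
  simp only [h]
  rw [lintegral_const_mul _ (by fun_prop), lintegral_one_sub_cos_mul hp, ← mul_assoc,
    ← ENNReal.ofReal_mul (by norm_num), abs_of_pos two_pos]
  ring_nf

theorem gaussAbsMoment_le_iff_Gamma_le {p : ℝ} :
    gaussAbsMoment p ≤ 2 ^ (p / 2 - 1) ↔ Gamma ((p + 1) / 2) ≤ √π / 2 := by
  have h : (0 : ℝ) < 2 ^ (p / 2) := by positivity
  rw [gaussAbsMoment, rpow_sub_one two_ne_zero, div_le_iff₀ (sqrt_pos.2 pi_pos),
    div_mul_eq_mul_div, mul_div_assoc, mul_le_mul_iff_right₀ h]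

theorem le_lintegral_one_sub_abs_cos_rpow {p s : ℝ} (hp : 9 / 5 ≤ p) (hp2 : p < 2) (hs : 2 ≤ s)
    (hC : gaussAbsMoment p ≤ 2 ^ (p / 2 - 1)) :
    ENNReal.ofReal (s ^ (p / 2)) * (ENNReal.ofReal (gaussAbsMoment p) * cosMoment p) ≤
      ∫⁻ x, ENNReal.ofReal (1 - |cos x| ^ s) ∂powMeasure p := by
  have hp0 : 0 < p := by linarith
  rw [← lintegral_one_sub_exp_rpow_powMeasure hp0 (by linarith)]
  refine lintegral_one_sub_rpow_le (f := fun x => |cos x|) (by fun_prop) (fun _ => abs_nonneg _)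
    abs_cos_le_one (by fun_prop) (fun _ => (exp_pos _).le)
    (fun x => exp_le_one_iff.2 (by nlinarith [sq_nonneg x])) (powMeasure_crossing hp hp2) ?_ ?_ hs
  · rw [lintegral_one_sub_abs_cos_sq hp0]
    exact ENNReal.mul_ne_top ENNReal.ofReal_ne_top (cosMoment_ne_top hp0 hp2)
  · rw [lintegral_one_sub_abs_cos_sq hp0, lintegral_one_sub_exp_rpow_powMeasure hp0 two_pos,
      ← mul_assoc, ← ENNReal.ofReal_mul (by positivity)]
    gcongr
    calc (2 : ℝ) ^ (p / 2) * gaussAbsMoment p ≤ 2 ^ (p / 2) * 2 ^ (p / 2 - 1) := by gcongr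
      _ = 2 ^ p / 2 := by rw [← rpow_add two_pos, ← rpow_sub_one two_ne_zero]; ring_nf

theorem mul_log_six_sub_le {a : ℝ} (h0 : 0 ≤ a) (h1 : a ≤ 1) :
    a * log (6 - 2 * a ^ 2) ≤ (1 + a) * log (1 + a) - (1 - a) * log (1 - a) := by
  set ψ : ℝ → ℝ := fun a => (1 + a) * log (1 + a) - (1 - a) * log (1 - a) -
    a * log (6 - 2 * a ^ 2) with hψ
  have d1 : ∀ x, 0 < x → x < 1 → HasDerivAt ψ
      (2 + log (1 + x) + log (1 - x) - log (6 - 2 * x ^ 2) + 4 * x ^ 2 / (6 - 2 * x ^ 2)) x := by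
    intro x hx hx1
    have n1 : 1 + x ≠ 0 := by linarith
    have n2 : 1 - x ≠ 0 := by linarith
    have n3 : 6 - 2 * x ^ 2 ≠ 0 := by nlinarith
    have e1 := (hasDerivAt_id' x).const_add 1
    have e2 := (hasDerivAt_id' x).const_sub 1
    have e3 := ((hasDerivAt_pow 2 x).const_mul 2).const_sub 6
    refine (((e1.mul (e1.log n1)).sub (e2.mul (e2.log n2))).sub
      ((hasDerivAt_id' x).mul (e3.log n3))).congr_deriv ?_
    field_simp
    push_cast
    ring
  have d2 : ∀ x, 0 < x → x < 1 → HasDerivAt (fun x =>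
      2 + log (1 + x) + log (1 - x) - log (6 - 2 * x ^ 2) + 4 * x ^ 2 / (6 - 2 * x ^ 2))
      (-(8 * x ^ 3) / ((1 - x ^ 2) * (3 - x ^ 2) ^ 2)) x := by
    intro x hx hx1
    have n1 : 1 + x ≠ 0 := by linarith
    have n2 : 1 - x ≠ 0 := by linarith
    have n3 : 6 - 2 * x ^ 2 ≠ 0 := by nlinarith
    have n4 : 1 - x ^ 2 ≠ 0 := by nlinarith
    have n5 : 3 - x ^ 2 ≠ 0 := by nlinarith
    have e1 := (hasDerivAt_id' x).const_add 1
    have e2 := (hasDerivAt_id' x).const_sub 1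
    have e3 := ((hasDerivAt_pow 2 x).const_mul 2).const_sub 6
    refine (((((e1.log n1).const_add 2).add (e2.log n2)).sub (e3.log n3)).add
      (((hasDerivAt_pow 2 x).const_mul 4).div e3 n3)).congr_deriv ?_
    rw [show 6 - 2 * x ^ 2 = 2 * (3 - x ^ 2) by ring, show 1 - x ^ 2 = (1 - x) * (1 + x) by ring]
    field_simp
    push_cast
    ring
  have hcont : ContinuousOn ψ (Set.Icc 0 1) := by
    have c1 : Continuous fun a : ℝ => (1 + a) * log (1 + a) :=
      continuous_mul_log.comp (by fun_prop : Continuous fun a : ℝ => 1 + a)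
    have c2 : Continuous fun a : ℝ => (1 - a) * log (1 - a) :=
      continuous_mul_log.comp (by fun_prop : Continuous fun a : ℝ => 1 - a)
    refine (c1.sub c2).continuousOn.sub (continuousOn_id.mul (ContinuousOn.log (by fun_prop) ?_))
    intro x hx
    nlinarith [hx.1, hx.2]
  have hconc : ConcaveOn ℝ (Set.Icc 0 1) ψ := by
    refine concaveOn_of_hasDerivWithinAt2_nonpos (convex_Icc 0 1) hcont
      (fun x hx => (d1 x ?_ ?_).hasDerivWithinAt) (fun x hx => (d2 x ?_ ?_).hasDerivWithinAt)
      (fun x hx => ?_) <;> rw [interior_Icc] at hx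
    · exact hx.1
    · exact hx.2
    · exact hx.1
    · exact hx.2
    · have h1 : 0 ≤ 1 - x ^ 2 := by nlinarith [hx.1, hx.2]
      have h2 := hx.1.le
      rw [neg_div]
      have : 0 ≤ 8 * x ^ 3 / ((1 - x ^ 2) * (3 - x ^ 2) ^ 2) := by positivity
      linarith
  have hlog4 : log 4 = 2 * log 2 := by
    rw [show (4 : ℝ) = 2 ^ 2 by norm_num, log_pow]; norm_num
  have h := hconc.2 (Set.left_mem_Icc.2 zero_le_one) (Set.right_mem_Icc.2 zero_le_one)
    (sub_nonneg.2 h1) h0 (sub_add_cancel 1 a)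
  simp only [hψ, smul_eq_mul] at h
  norm_num [hlog4] at h
  linarith

theorem sq_mul_log_add_le {a : ℝ} (h0 : 0 ≤ a) (h1 : a ≤ 1) :
    (1 + a) ^ 2 * log (1 + a) + (1 - a) ^ 2 * log (1 - a) + (3 - a ^ 2) * log (6 - 2 * a ^ 2) ≤
      8 * log 2 := by
  have hmono : MonotoneOn (fun a : ℝ => (1 + a) * ((1 + a) * log (1 + a)) +
      (1 - a) * ((1 - a) * log (1 - a)) + (3 - a ^ 2) * log (6 - 2 * a ^ 2)) (Set.Icc 0 1) := by
    refine monotoneOn_of_hasDerivWithinAt_nonneg (f' := fun x => 2 * ((1 + x) * log (1 + x) -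
      (1 - x) * log (1 - x) - x * log (6 - 2 * x ^ 2))) (convex_Icc 0 1) ?_ ?_ ?_
    · have c1 : Continuous fun a : ℝ => (1 + a) * log (1 + a) :=
        continuous_mul_log.comp (by fun_prop : Continuous fun a : ℝ => 1 + a)
      have c2 : Continuous fun a : ℝ => (1 - a) * log (1 - a) :=
        continuous_mul_log.comp (by fun_prop : Continuous fun a : ℝ => 1 - a)
      have c3 : ContinuousOn (fun a : ℝ => log (6 - 2 * a ^ 2)) (Set.Icc 0 1) :=
        ContinuousOn.log (by fun_prop) fun x hx => by nlinarith [hx.1, hx.2]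
      fun_prop
    · intro x hx
      rw [interior_Icc] at hx
      obtain ⟨hx, hx1⟩ := hx
      have n1 : 1 + x ≠ 0 := by linarith
      have n2 : 1 - x ≠ 0 := by linarith
      have n3 : 6 - 2 * x ^ 2 ≠ 0 := by nlinarith
      have e1 := (hasDerivAt_id' x).const_add 1
      have e2 := (hasDerivAt_id' x).const_sub 1
      have e3 := ((hasDerivAt_pow 2 x).const_mul 2).const_sub 6
      have e4 := (hasDerivAt_pow 2 x).const_sub 3
      refine HasDerivAt.hasDerivWithinAt ?_
      refine (((e1.mul (e1.mul (e1.log n1))).add (e2.mul (e2.mul (e2.log n2)))).add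
        (e4.mul (e3.log n3))).congr_deriv ?_
      simp only [Pi.mul_apply]
      have n4 : 3 - x ^ 2 ≠ 0 := by nlinarith
      generalize log (6 - 2 * x ^ 2) = L
      rw [show 6 - 2 * x ^ 2 = 2 * (3 - x ^ 2) by ring]
      field_simp
      push_cast
      ring
    · intro x hx
      rw [interior_Icc] at hx
      have := mul_log_six_sub_le hx.1.le hx.2.le
      linarith
  have hlog4 : log 4 = 2 * log 2 := by
    rw [show (4 : ℝ) = 2 ^ 2 by norm_num, log_pow]; norm_num
  have h := hmono (a := a) (b := 1) ⟨h0, h1⟩ (by simp) h1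
  norm_num [hlog4] at h
  linarith

theorem two_mul_two_rpow_le {a p : ℝ} (h0 : 0 ≤ a) (h1 : a ≤ 1) (hp : 0 < p) (hp2 : p ≤ 2) :
    2 * 2 ^ p ≤ (1 + a) ^ p + (1 - a) ^ p + (6 - 2 * a ^ 2) ^ (p / 2) := by
  have key : ∀ x : ℝ, 0 ≤ x →
      2 ^ p / 4 * (x ^ 2 * (1 - (2 - p) * (log x - log 2))) ≤ x ^ p := by
    intro x hx
    rcases hx.eq_or_lt with rfl | hx
    · simp [zero_rpow hp.ne']
    · have e1 := add_one_le_exp (-((2 - p) * (log x - log 2)))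
      have e2 : x ^ p = 2 ^ p / 4 * (x ^ 2 * exp (-((2 - p) * (log x - log 2)))) := by
        rw [rpow_def_of_pos hx, rpow_def_of_pos two_pos, ← exp_log (pow_pos hx 2),
          show (4 : ℝ) = exp (2 * log 2) by
            rw [mul_comm, ← rpow_def_of_pos two_pos]; norm_num, log_pow, ← exp_sub, ← exp_add,
          ← exp_add]
        congr 1; push_cast; ring
      rw [e2]
      gcongr
      linarith
  have hs : 0 < 6 - 2 * a ^ 2 := by nlinarith
  have k1 := key (1 + a) (by linarith)
  have k2 := key (1 - a) (by linarith)
  have k3 := key (√(6 - 2 * a ^ 2)) (sqrt_nonneg _)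
  rw [sq_sqrt hs.le, log_sqrt hs.le] at k3
  have e3 : √(6 - 2 * a ^ 2) ^ p = (6 - 2 * a ^ 2) ^ (p / 2) := by
    rw [sqrt_eq_rpow, ← rpow_mul hs.le]; ring_nf
  rw [e3] at k3
  have hχ := sq_mul_log_add_le h0 h1
  have h2 : (0 : ℝ) < 2 ^ p / 4 := by positivity
  have hχ' : 0 ≤ 2 ^ p / 4 * ((2 - p) * (8 * log 2 - ((1 + a) ^ 2 * log (1 + a) +
      (1 - a) ^ 2 * log (1 - a) + (3 - a ^ 2) * log (6 - 2 * a ^ 2)))) := by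
    have := sub_nonneg.2 hχ
    have := sub_nonneg.2 hp2
    positivity
  linarith

/-- The average of `φ (x + ∑ ± a)` over all choices of signs, where `a` runs through a list. -/
noncomputable def signAverage (φ : ℝ → ℝ) : List ℝ → ℝ → ℝ
  | [], x => φ x
  | a :: l, x => (signAverage φ l (x + a) + signAverage φ l (x - a)) / 2

/-- The sum of the squares of the entries of a list. -/
noncomputable def sqSum (l : List ℝ) : ℝ := (l.map fun a => a ^ 2).sum

@[simp] theorem sqSum_nil : sqSum [] = 0 := by simp [sqSum]

@[simp] theorem sqSum_cons (a : ℝ) (l : List ℝ) : sqSum (a :: l) = a ^ 2 + sqSum l := by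
  simp [sqSum]

theorem sqSum_nonneg (l : List ℝ) : 0 ≤ sqSum l :=
  List.sum_nonneg (by simp only [List.mem_map]; rintro _ ⟨a, -, rfl⟩; positivity)

theorem sqSum_map_mul (c : ℝ) (l : List ℝ) : sqSum (l.map (c * ·)) = c ^ 2 * sqSum l := by
  induction l with
  | nil => simp
  | cons a l ih => rw [List.map_cons, sqSum_cons, sqSum_cons, ih]; ring

theorem sqSum_perm {l l' : List ℝ} (h : l.Perm l') : sqSum l = sqSum l' :=
  (h.map _).sum_eq

theorem signAverage_perm (φ : ℝ → ℝ) {l l' : List ℝ} (h : l.Perm l') :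
    ∀ x, signAverage φ l x = signAverage φ l' x := by
  induction h with
  | nil => exact fun _ => rfl
  | cons a _ ih => intro x; simp only [signAverage, ih]
  | swap a b l =>
    intro x
    simp only [signAverage]
    rw [add_right_comm x b a, add_sub_right_comm x b a, sub_add_eq_add_sub x b a,
      sub_right_comm x b a, sub_add_eq_add_sub x a b]
    ring
  | trans _ _ ih₁ ih₂ => exact fun x => (ih₁ x).trans (ih₂ x)

theorem signAverage_neg {φ : ℝ → ℝ} (hφ : ∀ x, φ (-x) = φ x) (l : List ℝ) (x : ℝ) :
    signAverage φ l (-x) = signAverage φ l x := by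
  induction l generalizing x with
  | nil => exact hφ x
  | cons a l ih =>
    simp only [signAverage]
    rw [← ih (x + a), ← ih (x - a), neg_add, neg_sub', sub_neg_eq_add, ← sub_eq_add_neg]
    ring

theorem signAverage_cons_zero {φ : ℝ → ℝ} (hφ : ∀ x, φ (-x) = φ x) (l : List ℝ) (x : ℝ) :
    signAverage φ (x :: l) 0 = signAverage φ l x := by
  simp only [signAverage]
  rw [zero_add, zero_sub, signAverage_neg hφ]; ring

theorem signAverage_cons_swap {φ : ℝ → ℝ} (hφ : ∀ x, φ (-x) = φ x) (l : List ℝ) (a x : ℝ) :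
    signAverage φ (a :: l) x = signAverage φ (x :: l) a := by
  rw [← signAverage_cons_zero hφ, ← signAverage_cons_zero hφ (x :: l)]
  exact signAverage_perm φ (List.Perm.swap _ _ _) 0

theorem signAverage_map_mul (p c : ℝ) (l : List ℝ) (x : ℝ) :
    signAverage (fun y => |y| ^ p) (l.map (c * ·)) (c * x) =
      |c| ^ p * signAverage (fun y => |y| ^ p) l x := by
  induction l generalizing x with
  | nil => simp only [signAverage, List.map_nil, abs_mul]; rw [mul_rpow] <;> positivity
  | cons a l ih => simp only [signAverage, List.map_cons]; rw [← mul_add, ← mul_sub, ih, ih]; ring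

theorem signAverage_nonneg {φ : ℝ → ℝ} (hφ : ∀ x, 0 ≤ φ x) (l : List ℝ) (x : ℝ) :
    0 ≤ signAverage φ l x := by
  induction l generalizing x with
  | nil => exact hφ x
  | cons a l ih => exact div_nonneg (add_nonneg (ih _) (ih _)) two_pos.le

theorem abs_prod_cos_le_one (l : List ℝ) (x : ℝ) :
    |(l.map fun a => cos (a * x)).prod| ≤ 1 := by
  induction l with
  | nil => simp
  | cons a l ih =>
    rw [List.map_cons, List.prod_cons, abs_mul]
    exact mul_le_one₀ (abs_cos_le_one _) (abs_nonneg _) ih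

theorem measurable_prod_cos (l : List ℝ) :
    Measurable fun x => (l.map fun a => cos (a * x)).prod := by
  induction l with
  | nil => simp
  | cons a l ih => simp only [List.map_cons, List.prod_cons]; fun_prop

theorem lintegral_one_sub_cos_mul_prod {p : ℝ} (hp : 0 < p) (l : List ℝ) (u : ℝ) :
    ∫⁻ x, ENNReal.ofReal (1 - cos (u * x) * (l.map fun a => cos (a * x)).prod) ∂powMeasure p =
      ENNReal.ofReal (signAverage (fun y => |y| ^ p) l u) * cosMoment p := by
  induction l generalizing u with
  | nil => simpa [signAverage] using lintegral_one_sub_cos_mul hp u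
  | cons a l ih =>
    have hnn : ∀ y x, 0 ≤ 1 - cos (y * x) * (l.map fun a => cos (a * x)).prod := fun y x => by
      have : |cos (y * x) * (l.map fun a => cos (a * x)).prod| ≤ 1 := by
        rw [abs_mul]
        exact mul_le_one₀ (abs_cos_le_one _) (abs_nonneg _) (abs_prod_cos_le_one _ _)
      linarith [le_abs_self (cos (y * x) * (l.map fun a => cos (a * x)).prod)]
    have hm := measurable_prod_cos l
    have h : ∀ x, ENNReal.ofReal (1 - cos (u * x) * ((a :: l).map fun a => cos (a * x)).prod) =
        ENNReal.ofReal (1 / 2) *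
          (ENNReal.ofReal (1 - cos ((u + a) * x) * (l.map fun a => cos (a * x)).prod) +
            ENNReal.ofReal (1 - cos ((u - a) * x) * (l.map fun a => cos (a * x)).prod)) := by
      intro x
      rw [← ENNReal.ofReal_add (hnn _ _) (hnn _ _), ← ENNReal.ofReal_mul (by norm_num),
        List.map_cons,
        List.prod_cons, add_mul u a x, sub_mul u a x, cos_add, cos_sub]
      ring_nf
    have hK : ∀ x, 0 ≤ signAverage (fun y => |y| ^ p) l x :=
      signAverage_nonneg (fun _ => by positivity) l
    simp only [h]
    rw [lintegral_const_mul _ (by fun_prop), lintegral_add_left (by fun_prop), ih, ih, ← add_mul,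
      ← ENNReal.ofReal_add (hK _) (hK _), ← mul_assoc, ← ENNReal.ofReal_mul (by norm_num),
      signAverage]
    ring_nf

theorem gaussAbsMoment_le_signAverage_of_sq_le {p : ℝ} (hp : 9 / 5 ≤ p) (hp2 : p < 2)
    (hC : gaussAbsMoment p ≤ 2 ^ (p / 2 - 1)) {l : List ℝ} (hl : sqSum l = 1)
    (hsmall : ∀ a ∈ l, 2 * a ^ 2 ≤ 1) :
    gaussAbsMoment p ≤ signAverage (fun y => |y| ^ p) l 0 := by
  have hp0 : 0 < p := by linarith
  have hK0 := cosMoment_ne_zero hp0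
  have hKt := cosMoment_ne_top hp0 hp2
  have hsum : ∑ i : Fin l.length, l[(i : ℕ)] ^ 2 = 1 := by
    rw [Fin.sum_univ_fun_getElem l fun a => a ^ 2, ← hl, sqSum]
  have h1 := lintegral_one_sub_cos_mul_prod hp0 l 0
  simp only [zero_mul, cos_zero, one_mul] at h1
  have hpt : ∀ x, ∑ i : Fin l.length, ENNReal.ofReal (l[(i : ℕ)] ^ 2) *
      ENNReal.ofReal (1 - |cos (l[(i : ℕ)] * x)| ^ (1 / l[(i : ℕ)] ^ 2)) ≤
      ENNReal.ofReal (1 - (l.map fun a => cos (a * x)).prod) := by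
    intro x
    have hle : ∀ i : Fin l.length, |cos (l[(i : ℕ)] * x)| ^ (1 / l[(i : ℕ)] ^ 2) ≤ 1 := fun i =>
      rpow_le_one (abs_nonneg _) (abs_cos_le_one _) (by positivity)
    have hag := geom_mean_le_arith_mean_weighted Finset.univ
      (fun i : Fin l.length => l[(i : ℕ)] ^ 2)
      (fun i => |cos (l[(i : ℕ)] * x)| ^ (1 / l[(i : ℕ)] ^ 2))
      (fun i _ => sq_nonneg _) hsum (fun i _ => by positivity)
    have e : ∀ i : Fin l.length, (|cos (l[(i : ℕ)] * x)| ^ (1 / l[(i : ℕ)] ^ 2)) ^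
        (l[(i : ℕ)] ^ 2) = |cos (l[(i : ℕ)] * x)| := by
      intro i
      rw [← rpow_mul (abs_nonneg _)]
      rcases eq_or_ne l[(i : ℕ)] 0 with h | h
      · simp [h]
      · rw [one_div_mul_cancel (pow_ne_zero 2 h), rpow_one]
    simp only [e] at hag
    rw [← Finset.abs_prod, Fin.prod_univ_fun_getElem l fun a => cos (a * x)] at hag
    simp only [← ENNReal.ofReal_mul (sq_nonneg _)]
    rw [← ENNReal.ofReal_sum_of_nonneg
      fun i _ => mul_nonneg (sq_nonneg _) (sub_nonneg.2 (hle i))]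
    apply ENNReal.ofReal_le_ofReal
    simp only [mul_sub, mul_one, Finset.sum_sub_distrib, hsum]
    linarith [le_abs_self (l.map fun a => cos (a * x)).prod]
  have h2 := lintegral_mono (μ := powMeasure p) hpt
  rw [h1, lintegral_finsetSum _ (fun i _ => by fun_prop)] at h2
  have h3 : ∀ i : Fin l.length, ENNReal.ofReal (l[(i : ℕ)] ^ 2) *
      (ENNReal.ofReal (gaussAbsMoment p) * cosMoment p) ≤
      ∫⁻ x, ENNReal.ofReal (l[(i : ℕ)] ^ 2) *
        ENNReal.ofReal (1 - |cos (l[(i : ℕ)] * x)| ^ (1 / l[(i : ℕ)] ^ 2)) ∂powMeasure p := by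
    intro i
    rw [lintegral_const_mul _ (by fun_prop)]
    have hs := hsmall l[(i : ℕ)] (List.getElem_mem _)
    generalize l[(i : ℕ)] = a at hs
    rcases eq_or_ne a 0 with rfl | ha
    · simp
    gcongr
    have ha' : 0 < |a| := abs_pos.2 ha
    have e : ∀ x, |cos (a * x)| = |cos (|a| * x)| := by
      intro x
      rcases abs_choice a with h | h <;> rw [h]
      rw [neg_mul, cos_neg]
    simp only [e]
    rw [lintegral_powMeasure_comp_mul p ha'
      (f := fun x => ENNReal.ofReal (1 - |cos x| ^ (1 / a ^ 2))) (by fun_prop)]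
    have h4 := le_lintegral_one_sub_abs_cos_rpow (s := 1 / a ^ 2) hp hp2
      (by rw [le_div_iff₀ (by positivity)]; exact hs) hC
    refine le_trans (le_of_eq ?_) (mul_le_mul_right h4 _)
    rw [← mul_assoc, ← ENNReal.ofReal_mul (by positivity)]
    have : |a| ^ p * (1 / a ^ 2) ^ (p / 2) = 1 := by
      rw [← sq_abs a, one_div, inv_rpow (by positivity), ← rpow_natCast, ← rpow_mul ha'.le,
        show ((2 : ℕ) : ℝ) * (p / 2) = p by push_cast; ring, mul_inv_cancel₀ (by positivity)]
    rw [this, ENNReal.ofReal_one, one_mul]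
  have h5 := (Finset.sum_le_sum fun i (_ : i ∈ Finset.univ) => h3 i).trans h2
  rw [← Finset.sum_mul, ← ENNReal.ofReal_sum_of_nonneg fun i _ => sq_nonneg _, hsum,
    ENNReal.ofReal_one, one_mul, ENNReal.mul_le_mul_iff_left hK0 hKt,
    ENNReal.ofReal_le_ofReal_iff (signAverage_nonneg (fun _ => by positivity) _ _)] at h5
  exact h5

theorem gaussAbsMoment_mul_le_signAverage_of_sq_le {p : ℝ} (hp : 9 / 5 ≤ p) (hp2 : p < 2)
    (hC : gaussAbsMoment p ≤ 2 ^ (p / 2 - 1)) {l : List ℝ} (hl : 0 < sqSum l)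
    (hsmall : ∀ a ∈ l, 2 * a ^ 2 ≤ sqSum l) :
    gaussAbsMoment p * sqSum l ^ (p / 2) ≤ signAverage (fun y => |y| ^ p) l 0 := by
  have hs := sqrt_pos.2 hl
  have hsq := sq_sqrt hl.le
  have h := gaussAbsMoment_le_signAverage_of_sq_le hp hp2 hC
    (l := l.map ((√(sqSum l))⁻¹ * ·))
    (by rw [sqSum_map_mul, inv_pow, hsq, inv_mul_cancel₀ hl.ne']) (by
      intro b hb
      obtain ⟨a, ha, rfl⟩ := List.mem_map.1 hb
      rw [mul_pow, inv_pow, hsq, mul_left_comm, inv_mul_le_one₀ hl]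
      exact hsmall a ha)
  have h2 := signAverage_map_mul p (√(sqSum l))⁻¹ l 0
  rw [mul_zero] at h2
  rw [h2, abs_of_pos (inv_pos.2 hs), inv_rpow hs.le, le_inv_mul_iff₀ (by positivity)] at h
  rw [mul_comm]
  refine le_of_eq_of_le ?_ h
  rw [sqrt_eq_rpow, ← rpow_mul hl.le]; ring_nf

/-- The function `(1 + x) ^ q`, reflected through its value at `1` on `(-∞, 1]`. -/
noncomputable def reflectedRpow (q x : ℝ) : ℝ :=
  if x ≤ 1 then 2 * 2 ^ q - (3 - x) ^ q else (1 + x) ^ q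

theorem rpow_one_add_le_reflectedRpow {q x : ℝ} (hq : 0 < q) (hq1 : q ≤ 1) (hx : 0 ≤ x) :
    (1 + x) ^ q ≤ reflectedRpow q x := by
  rw [reflectedRpow]
  split_ifs with h
  · have := rpow_add_rpow_le (a := 3 - x) (b := 2) (c := 2) (d := 1 + x) hq hq1 (by linarith)
      (by linarith) (by linarith) (by linarith) (by linarith) (by linarith)
    linarith
  · exact le_rfl

theorem two_mul_reflectedRpow_le {q u v : ℝ} (hq : 0 < q) (hq1 : q ≤ 1) (hu : 0 ≤ u) (hv : 0 ≤ v)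
    (huv : u + v ≤ 2) :
    2 * reflectedRpow q ((u + v) / 2) ≤ reflectedRpow q u + reflectedRpow q v := by
  wlog hle : v ≤ u generalizing u v
  · have := this hv hu (by linarith) (by linarith)
    rw [add_comm v u] at this
    linarith
  simp only [reflectedRpow]
  rw [if_pos (by linarith : (u + v) / 2 ≤ 1), if_pos (by linarith : v ≤ 1)]
  split_ifs with h
  · have := rpow_add_rpow_le (a := 3 - v) (b := 3 - (u + v) / 2) (c := 3 - (u + v) / 2)
      (d := 3 - u) hq hq1 (by linarith) (by linarith) (by linarith) (by linarith) (by linarith)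
      (by linarith)
    linarith
  · have h1 := rpow_add_rpow_le (a := 3 - v) (b := 3 - (u + v) / 2) (c := 2 + (u - v) / 2)
      (d := 2) hq hq1 (by linarith) (by linarith) (by linarith) (by linarith) (by linarith)
      (by linarith)
    have h2 := rpow_add_rpow_le (a := 2 + (u - v) / 2) (b := 3 - (u + v) / 2) (c := 1 + u)
      (d := 2) hq hq1 (by linarith) (by linarith) (by linarith) (by linarith) (by linarith)
      (by linarith)
    linarith

theorem gaussAbsMoment_mul_reflectedRpow_le {p : ℝ} (hp : 9 / 5 ≤ p) (hp2 : p < 2)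
    (hC : gaussAbsMoment p ≤ 2 ^ (p / 2 - 1)) (l : List ℝ) :
    gaussAbsMoment p * reflectedRpow (p / 2) (sqSum l) ≤ signAverage (fun y => |y| ^ p) l 1 := by
  have hp0 : 0 < p := by linarith
  have hC0 := gaussAbsMoment_pos hp0
  have heven : ∀ x : ℝ, (fun y : ℝ => |y| ^ p) (-x) = (fun y => |y| ^ p) x := fun x => by
    simp only [abs_neg]
  have hbase : ∀ a : ℝ, |a| ≤ 1 → gaussAbsMoment p * (2 * 2 ^ (p / 2) - (3 - a ^ 2) ^ (p / 2)) ≤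
      (|1 + a| ^ p + |1 - a| ^ p) / 2 := by
    intro a ha
    have h1 := two_mul_two_rpow_le (abs_nonneg a) ha hp0 hp2.le
    have h2 : (1 + |a|) ^ p + (1 - |a|) ^ p = |1 + a| ^ p + |1 - a| ^ p := by
      have ha' := abs_le.1 ha
      rw [abs_of_nonneg (by linarith : 0 ≤ 1 + a), abs_of_nonneg (by linarith : 0 ≤ 1 - a)]
      rcases abs_choice a with h | h <;> rw [h]
      rw [sub_neg_eq_add, ← sub_eq_add_neg, add_comm]
    have ha2 : a ^ 2 ≤ 1 := by rw [← sq_abs]; exact pow_le_one₀ (abs_nonneg a) ha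
    rw [h2, sq_abs, show 6 - 2 * a ^ 2 = 2 * (3 - a ^ 2) by ring,
      mul_rpow two_pos.le (by linarith)] at h1
    have h3 : 0 ≤ 2 * 2 ^ (p / 2) - (3 - a ^ 2) ^ (p / 2) := by
      have := rpow_one_add_le_reflectedRpow (q := p / 2) (by linarith) (by linarith) (sq_nonneg a)
      rw [reflectedRpow, if_pos ha2] at this
      exact le_trans (by positivity) this
    have h4 : (2 : ℝ) ^ p = 2 ^ (p / 2) * 2 ^ (p / 2) := by rw [← rpow_add two_pos]; ring_nf
    calc _ ≤ 2 ^ (p / 2 - 1) * (2 * 2 ^ (p / 2) - (3 - a ^ 2) ^ (p / 2)) := by gcongr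
      _ = (2 * 2 ^ p - 2 ^ (p / 2) * (3 - a ^ 2) ^ (p / 2)) / 2 := by
        rw [h4, rpow_sub_one two_ne_zero]; ring
      _ ≤ _ := by linarith
  have hsmall : ∀ l : List ℝ, sqSum l ≤ 1 → (∀ l' : List ℝ, l'.length < l.length →
      gaussAbsMoment p * reflectedRpow (p / 2) (sqSum l') ≤
        signAverage (fun y => |y| ^ p) l' 1) →
      gaussAbsMoment p * reflectedRpow (p / 2) (sqSum l) ≤ signAverage (fun y => |y| ^ p) l 1 := by
    intro l hl ih
    match l, hl with
    | [], _ =>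
      have := hbase 0 (by simp)
      norm_num at this
      norm_num [reflectedRpow, signAverage]
      linarith
    | [a], hl =>
      rw [sqSum_cons, sqSum_nil, add_zero] at hl ⊢
      rw [reflectedRpow, if_pos hl]
      exact hbase a ((sq_le_one_iff_abs_le_one a).1 hl)
    | a :: b :: l, hl =>
      have h1 := ih ((a + b) :: l) (by simp)
      have h2 := ih ((a - b) :: l) (by simp)
      have hy := sqSum_nonneg l
      rw [sqSum_cons] at h1 h2
      rw [sqSum_cons, sqSum_cons] at hl ⊢
      have h3 := two_mul_reflectedRpow_le (q := p / 2) (u := (a + b) ^ 2 + sqSum l)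
        (v := (a - b) ^ 2 + sqSum l) (by linarith) (by linarith) (by positivity) (by positivity)
        (by linarith)
      rw [show ((a + b) ^ 2 + sqSum l + ((a - b) ^ 2 + sqSum l)) / 2 =
        a ^ 2 + (b ^ 2 + sqSum l) by ring] at h3
      have h4 := mul_le_mul_of_nonneg_left h3 hC0.le
      have h5 : signAverage (fun y => |y| ^ p) (a :: b :: l) 1 =
          (signAverage (fun y => |y| ^ p) ((a + b) :: l) 1 +
            signAverage (fun y => |y| ^ p) ((a - b) :: l) 1) / 2 := by
        simp only [signAverage]
        rw [add_assoc, add_sub_assoc, sub_add, sub_sub]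
        ring
      rw [h5]
      linarith
  induction hn : l.length using Nat.strong_induction_on generalizing l with
  | _ n ih =>
    rcases le_or_gt (sqSum l) 1 with hl | hl
    · exact hsmall l hl fun l' hl' => ih l'.length (hn ▸ hl') l' rfl
    rw [reflectedRpow, if_neg (not_le.2 hl)]
    by_cases hbig : ∃ a ∈ l, 1 + sqSum l < 2 * a ^ 2
    · obtain ⟨a, ha, hbig⟩ := hbig
      have hperm := List.perm_cons_erase ha
      set l' := l.erase a with hl'
      have hlen : (1 :: l').length = n := by rw [← hn, hperm.length_eq]; rfl
      have hsq : sqSum l = a ^ 2 + sqSum l' := by rw [sqSum_perm hperm, sqSum_cons]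
      have ha2 : 0 < a ^ 2 := by linarith
      have ha0 : a ≠ 0 := by rintro rfl; norm_num at ha2
      have hy := sqSum_nonneg l'
      have hM : sqSum ((1 :: l').map (a⁻¹ * ·)) = (1 + sqSum l') / a ^ 2 := by
        rw [sqSum_map_mul, sqSum_cons]; field_simp
      have h1 := hsmall ((1 :: l').map (a⁻¹ * ·))
        (by rw [hM, div_le_one ha2]; linarith)
        (fun l'' hl'' => ih l''.length (by rwa [List.length_map, hlen] at hl'') l'' rfl)
      have h2 := signAverage_map_mul p a⁻¹ (1 :: l') a
      rw [inv_mul_cancel₀ ha0] at h2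
      rw [h2, signAverage_cons_swap heven, ← signAverage_perm _ hperm, hM, abs_inv,
        inv_rpow (abs_nonneg _), le_inv_mul_iff₀ (by positivity)] at h1
      refine le_trans ?_ h1
      have h3 := rpow_one_add_le_reflectedRpow (q := p / 2) (x := (1 + sqSum l') / a ^ 2)
        (by linarith) (by linarith) (by positivity)
      have h4 : (1 + sqSum l) ^ (p / 2) = |a| ^ p * (1 + (1 + sqSum l') / a ^ 2) ^ (p / 2) := by
        rw [show |a| ^ p = (a ^ 2) ^ (p / 2) by
          rw [← sq_abs, ← rpow_natCast, ← rpow_mul (abs_nonneg _)]; push_cast; ring_nf,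
          ← mul_rpow ha2.le (by positivity), hsq]
        congr 1; field_simp; ring
      rw [h4, mul_left_comm]
      gcongr
    · push Not at hbig
      have h1 := gaussAbsMoment_mul_le_signAverage_of_sq_le hp hp2 hC (l := 1 :: l)
        (by rw [sqSum_cons]; linarith) (by
          intro a ha
          rw [sqSum_cons, one_pow]
          rcases List.mem_cons.1 ha with rfl | ha
          · linarith
          · exact hbig a ha)
      rwa [signAverage_cons_zero heven, sqSum_cons, one_pow] at h1

theorem gaussAbsMoment_mul_le_signAverage {p : ℝ} (hp : 9 / 5 ≤ p) (hp2 : p < 2)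
    (hC : gaussAbsMoment p ≤ 2 ^ (p / 2 - 1)) (l : List ℝ) :
    gaussAbsMoment p * sqSum l ^ (p / 2) ≤ signAverage (fun y => |y| ^ p) l 0 := by
  have hp0 : 0 < p := by linarith
  by_cases hbig : ∃ a ∈ l, sqSum l < 2 * a ^ 2
  · obtain ⟨a, ha, hbig⟩ := hbig
    have hperm := List.perm_cons_erase ha
    set l' := l.erase a with hl'
    have hsq : sqSum l = a ^ 2 + sqSum l' := by rw [sqSum_perm hperm, sqSum_cons]
    have ha2 : 0 < a ^ 2 := by have := sqSum_nonneg l'; linarith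
    have ha0 : a ≠ 0 := by rintro rfl; norm_num at ha2
    have hy := sqSum_nonneg l'
    have h1 := gaussAbsMoment_mul_reflectedRpow_le hp hp2 hC (l'.map (a⁻¹ * ·))
    have h2 := signAverage_map_mul p a⁻¹ l' a
    rw [inv_mul_cancel₀ ha0] at h2
    rw [h2, sqSum_map_mul, ← signAverage_cons_zero (fun x => by simp only [abs_neg]),
      ← signAverage_perm _ hperm, abs_inv,
      inv_rpow (abs_nonneg _), le_inv_mul_iff₀ (by positivity)] at h1
    refine le_trans ?_ h1
    have h3 := rpow_one_add_le_reflectedRpow (q := p / 2) (x := a⁻¹ ^ 2 * sqSum l')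
      (by linarith) (by linarith) (by positivity)
    have h4 : sqSum l ^ (p / 2) = |a| ^ p * (1 + a⁻¹ ^ 2 * sqSum l') ^ (p / 2) := by
      rw [show |a| ^ p = (a ^ 2) ^ (p / 2) by
        rw [← sq_abs, ← rpow_natCast, ← rpow_mul (abs_nonneg _)]; push_cast; ring_nf,
        ← mul_rpow ha2.le (by positivity), hsq]
      congr 1; field_simp
    have hC0 := (gaussAbsMoment_pos hp0).le
    rw [h4, mul_left_comm]
    gcongr
  · push Not at hbig
    rcases (sqSum_nonneg l).eq_or_lt with h0 | h0
    · rw [← h0, zero_rpow (by linarith), mul_zero]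
      exact signAverage_nonneg (fun _ => by positivity) _ _
    · exact gaussAbsMoment_mul_le_signAverage_of_sq_le hp hp2 hC h0 hbig

theorem Gamma_add_natCast {s : ℝ} (hs : 0 < s) (n : ℕ) :
    Gamma (s + n) = Gamma s * ∏ k ∈ Finset.range n, (s + k) := by
  induction n with
  | zero => simp
  | succ n ih =>
    rw [Nat.cast_succ, ← add_assoc, Gamma_add_one (by positivity), ih, Finset.prod_range_succ]
    ring

theorem Gamma_three_halves : Gamma (3 / 2) = √π / 2 := by
  rw [show (3 / 2 : ℝ) = 1 / 2 + 1 by norm_num, Gamma_add_one (by norm_num), Gamma_one_half_eq]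
  ring

theorem sqrt_pi_div_two_lt_Gamma : √π / 2 < Gamma (7 / 5) := by
  by_contra! hle
  have h0 : 0 < Gamma (7 / 5) := Gamma_pos_of_pos (by norm_num)
  have h1 := Gamma_mul_add_mul_le_rpow_Gamma_mul_rpow_Gamma
    (s := 7 / 5 + (28 : ℕ)) (t := ((29 : ℕ) : ℝ) + 1) (a := 5 / 6) (b := 1 / 6)
    (by norm_num) (by norm_num) (by norm_num) (by norm_num) (by norm_num)
  rw [show 5 / 6 * (7 / 5 + ((28 : ℕ) : ℝ)) + 1 / 6 * (((29 : ℕ) : ℝ) + 1) = 3 / 2 + (28 : ℕ) by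
    norm_num, Gamma_nat_eq_factorial, Gamma_add_natCast (by norm_num),
    Gamma_add_natCast (by norm_num), Gamma_three_halves] at h1
  set A : ℝ := ∏ k ∈ Finset.range 28, (3 / 2 + (k : ℝ)) with hA
  set B : ℝ := ∏ k ∈ Finset.range 28, (7 / 5 + (k : ℝ)) with hB
  have hB0 : 0 < B := Finset.prod_pos fun k _ => by positivity
  have hA0 : 0 < A := Finset.prod_pos fun k _ => by positivity
  have hc : (1772453 / 2000000 : ℝ) < √π / 2 := by
    have := Real.lt_sqrt_of_sq_lt (x := 1772453 / 1000000) (y := π)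
      (by nlinarith [pi_gt_d6])
    linarith
  have hc0 : 0 < √π / 2 := by linarith
  have h2 : (√π / 2 * A) ^ 6 ≤ (Gamma (7 / 5) * B) ^ 5 * (Nat.factorial 29 : ℝ) := by
    have h3 := pow_le_pow_left₀ (by positivity) h1 6
    rwa [mul_pow (_ ^ (5 / 6 : ℝ)), ← rpow_natCast (_ ^ (5 / 6 : ℝ)),
      ← rpow_natCast (_ ^ (1 / 6 : ℝ)),
      ← rpow_mul (by positivity), ← rpow_mul (by positivity),
      show (5 / 6 : ℝ) * ((6 : ℕ) : ℝ) = (5 : ℕ) by norm_num,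
      show (1 / 6 : ℝ) * ((6 : ℕ) : ℝ) = 1 by norm_num, rpow_one, rpow_natCast] at h3
  have h4 : (√π / 2 * A) ^ 6 ≤ (√π / 2 * B) ^ 5 * (Nat.factorial 29 : ℝ) := h2.trans (by gcongr)
  have h5 : √π / 2 * A ^ 6 ≤ B ^ 5 * (Nat.factorial 29 : ℝ) := by
    refine le_of_mul_le_mul_left ?_ (pow_pos hc0 5)
    calc (√π / 2) ^ 5 * (√π / 2 * A ^ 6) = (√π / 2 * A) ^ 6 := by ring
      _ ≤ _ := h4
      _ = _ := by ring
  have h6 : B ^ 5 * (Nat.factorial 29 : ℝ) < 1772453 / 2000000 * A ^ 6 := by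
    rw [hA, hB]
    simp only [Finset.prod_range_succ, Finset.prod_range_zero, Nat.factorial]
    norm_num
  have h7 : 1772453 / 2000000 * A ^ 6 < √π / 2 * A ^ 6 := by gcongr
  linarith

theorem exists_hasDerivAt_Gamma_three_halves : ∃ d, 0 < d ∧ HasDerivAt Gamma d (3 / 2) := by
  refine ⟨√π * (1 - (eulerMascheroniConstant + 2 * log 2) / 2), ?_, ?_⟩
  · have h := eulerMascheroniConstant_lt_eulerMascheroniSeq' 16
    have h1 : eulerMascheroniSeq' 16 = 2436559 / 720720 - 4 * log 2 := by
      rw [eulerMascheroniSeq', if_neg (by norm_num), show ((16 : ℕ) : ℝ) = 2 ^ 4 by norm_num,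
        log_pow]
      norm_num [harmonic, Finset.sum_range_succ]
    have := log_two_gt_d9
    have : 0 < √π := sqrt_pos.2 pi_pos
    refine mul_pos this ?_
    rw [h1] at h
    norm_num at *
    linarith
  · have h1 : HasDerivAt (fun x => (x - 1) * Gamma (x - 1)) _ (3 / 2) :=
      ((hasDerivAt_id' (3 / 2 : ℝ)).sub_const 1).mul
        (HasDerivAt.comp_sub_const (3 / 2 : ℝ) 1 (f := Gamma)
          (by rw [show (3 / 2 - 1 : ℝ) = 1 / 2 by norm_num]; exact hasDerivAt_Gamma_one_half))
    refine (h1.congr_deriv ?_).congr_of_eventuallyEq ?_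
    · rw [show (3 / 2 - 1 : ℝ) = 1 / 2 by norm_num, Gamma_one_half_eq]; ring
    · filter_upwards [lt_mem_nhds (show (1 : ℝ) < 3 / 2 by norm_num)] with x hx
      rw [← Gamma_add_one (by linarith), sub_add_cancel]

theorem exists_Gamma_eq :
    ∃ p : ℝ, 9 / 5 < p ∧ p < 2 ∧ Gamma ((p + 1) / 2) = √π / 2 := by
  obtain ⟨d, hd, h⟩ := exists_hasDerivAt_Gamma_three_halves
  have h1 := (hasDerivAt_iff_tendsto_slope.1 h).eventually (lt_mem_nhds hd)
  have h2 := (h1.filter_mono (nhdsWithin_mono (s := Set.Iio (3 / 2)) (3 / 2 : ℝ)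
    (fun x hx => ne_of_lt hx))).and
    (eventually_mem_nhdsWithin.and (mem_nhdsWithin_of_mem_nhds
      (lt_mem_nhds (show (7 / 5 : ℝ) < 3 / 2 by norm_num))))
  obtain ⟨x, hx1, hx2, hx3⟩ := h2.exists
  simp only [Set.mem_Iio] at hx2
  have hx3' : 7 / 5 < x := hx3
  have hlt : Gamma x < √π / 2 := by
    rw [slope_def_field, Gamma_three_halves] at hx1
    by_contra! hc
    exact absurd hx1 (not_lt.2 (div_nonpos_of_nonneg_of_nonpos (by linarith) (by linarith)))
  have hcont : ContinuousOn Gamma (Set.Icc (7 / 5) x) := fun y hy =>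
    (differentiableOn_Gamma_Ioi.differentiableAt
      (Ioi_mem_nhds (show (0 : ℝ) < y by linarith [hy.1]))).continuousAt.continuousWithinAt
  obtain ⟨z, hz, hz2⟩ := intermediate_value_Ioo' hx3'.le hcont ⟨hlt, sqrt_pi_div_two_lt_Gamma⟩
  exact ⟨2 * z - 1, by linarith [hz.1], by linarith [hz.2], by rw [← hz2]; ring_nf⟩

theorem exists_khintchineP0_le :
    ∃ p, khintchineP0 ≤ p ∧ 9 / 5 < p ∧ p < 2 ∧ Gamma ((p + 1) / 2) = √π / 2 := by
  obtain ⟨p, h1, h2, h3⟩ := exists_Gamma_eq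
  exact ⟨p, csInf_le ⟨1, fun q hq => hq.1.le⟩ ⟨by linarith, h2, h3⟩, h1, h2, h3⟩

theorem Gamma_le_of_khintchineP0_lt {r : ℝ} (h : khintchineP0 < r) (hr : r < 2) :
    9 / 5 ≤ r ∧ Gamma ((r + 1) / 2) ≤ √π / 2 := by
  obtain ⟨q, h1, h2, h3⟩ := exists_Gamma_eq
  obtain ⟨p, ⟨hp1, hp2, hp3⟩, hpr⟩ := exists_lt_of_csInf_lt (s := {p : ℝ | 1 < p ∧ p < 2 ∧
    Gamma ((p + 1) / 2) = √π / 2}) ⟨q, by linarith, h2, h3⟩ h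
  have key : ∀ t, p ≤ t → t ≤ 2 → Gamma ((t + 1) / 2) ≤ √π / 2 := by
    intro t ht1 ht2
    have hc := convexOn_Gamma.le_on_segment (x := (p + 1) / 2) (y := 3 / 2) (z := (t + 1) / 2)
      (Set.mem_Ioi.2 (by linarith)) (Set.mem_Ioi.2 (by norm_num))
      (by rw [segment_eq_Icc (by linarith)]; exact ⟨by linarith, by linarith⟩)
    rwa [hp3, Gamma_three_halves, max_self] at hc
  refine ⟨?_, key r hpr.le hr.le⟩
  by_contra! hlt
  have := key (9 / 5) (by linarith) (by norm_num)
  rw [show ((9 / 5 + 1) / 2 : ℝ) = 7 / 5 by norm_num] at this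
  exact absurd sqrt_pi_div_two_lt_Gamma (not_lt.2 this)

theorem measurable_rademacher (j : ℕ) : Measurable (rademacher j) := by
  have h : Measurable Real.sign :=
    Measurable.ite measurableSet_Iio measurable_const
      (Measurable.ite measurableSet_Ioi measurable_const measurable_const)
  exact h.comp (by fun_prop)

theorem abs_rademacher_le_one (j : ℕ) (t : ℝ) : |rademacher j t| ≤ 1 := by
  rcases Real.sign_apply_eq (Real.sin ((2 : ℝ) ^ j * Real.pi * t)) with h | h | h <;>
    simp [rademacher, h]

theorem rademacher_succ (j : ℕ) (t : ℝ) : rademacher (j + 1) t = rademacher j (2 * t) := by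
  simp only [rademacher]; congr 2; ring

theorem rademacher_add_one (j : ℕ) (t : ℝ) : rademacher (j + 1) (t + 1) = rademacher (j + 1) t := by
  simp only [rademacher]
  rw [show (2 : ℝ) ^ (j + 1) * π * (t + 1) = 2 ^ (j + 1) * π * t + (2 ^ j : ℕ) * (2 * π) by
    push_cast; ring, sin_add_nat_mul_two_pi]

theorem rademacher_one_of_lt_half {t : ℝ} (h0 : 0 < t) (h : t < 1 / 2) : rademacher 1 t = 1 :=
  Real.sign_of_pos (sin_pos_of_pos_of_lt_pi (by positivity) (by nlinarith [pi_pos]))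

theorem rademacher_one_of_half_lt {t : ℝ} (h0 : 1 / 2 < t) (h : t < 1) : rademacher 1 t = -1 := by
  refine Real.sign_of_neg ?_
  rw [show (2 : ℝ) ^ 1 * π * t = (2 * t - 1) * π + π by ring, sin_add_pi, neg_lt_zero]
  exact sin_pos_of_pos_of_lt_pi (by nlinarith [pi_pos]) (by nlinarith [pi_pos])

/-- The Rademacher sum `∑ a_j r_j`. -/
noncomputable def rademacherSum {N : ℕ} (a : Fin N → ℝ) (t : ℝ) : ℝ :=
  ∑ i : Fin N, rademacher (i.1 + 1) t * a i

theorem measurable_rademacherSum {N : ℕ} (a : Fin N → ℝ) : Measurable (rademacherSum a) :=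
  Finset.measurable_sum _ fun _ _ => (measurable_rademacher _).mul_const _

theorem abs_rademacherSum_le {N : ℕ} (a : Fin N → ℝ) (t : ℝ) :
    |rademacherSum a t| ≤ ∑ i, |a i| := by
  refine (Finset.abs_sum_le_sum_abs _ _).trans (Finset.sum_le_sum fun i _ => ?_)
  rw [abs_mul]
  exact mul_le_of_le_one_left (abs_nonneg _) (abs_rademacher_le_one _ _)

theorem rademacherSum_add_one {N : ℕ} (a : Fin N → ℝ) (t : ℝ) :
    rademacherSum a (t + 1) = rademacherSum a t := by
  simp only [rademacherSum, rademacher_add_one]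

theorem rademacherSum_succ {N : ℕ} (a : Fin (N + 1) → ℝ) (t : ℝ) :
    rademacherSum a t =
      rademacher 1 t * a 0 + rademacherSum (fun i => a i.succ) (2 * t) := by
  simp only [rademacherSum, Fin.sum_univ_succ, Fin.val_zero, Fin.val_succ,
    rademacher_succ _ t]

theorem integrable_comp_rademacherSum {μ : Measure ℝ} [IsFiniteMeasure μ] {φ : ℝ → ℝ}
    (hφ : Continuous φ) {N : ℕ} (a : Fin N → ℝ) (x : ℝ) :
    Integrable (fun t => φ (x + rademacherSum a t)) μ := by
  obtain ⟨C, hC⟩ := (isCompact_closedBall x (∑ i, |a i|)).exists_bound_of_continuousOn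
    hφ.continuousOn
  refine Integrable.of_bound (hφ.measurable.comp
    ((measurable_rademacherSum a).const_add x)).aestronglyMeasurable C (ae_of_all _ fun t => ?_)
  refine hC _ ?_
  rw [mem_closedBall_iff_norm, add_sub_cancel_left]
  exact abs_rademacherSum_le a t

theorem intervalIntegral_comp_rademacherSum {φ : ℝ → ℝ} (hφ : Continuous φ) {N : ℕ}
    (a : Fin N → ℝ) (x : ℝ) :
    ∫ t in (0 : ℝ)..1, φ (x + rademacherSum a t) = signAverage φ (List.ofFn a) x := by
  induction N generalizing x with
  | zero => simp [rademacherSum, signAverage]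
  | succ N ih =>
    have h_int : ∀ {M : ℕ} (b : Fin M → ℝ) (y u v : ℝ),
        IntervalIntegrable (fun t => φ (y + rademacherSum b t)) volume u v := fun b y u v =>
      ⟨integrable_comp_rademacherSum hφ b y, integrable_comp_rademacherSum hφ b y⟩
    set b : Fin N → ℝ := fun i => a i.succ
    have h1 : ∫ t in (0 : ℝ)..(1 / 2), φ (x + rademacherSum a t) =
        signAverage φ (List.ofFn b) (x + a 0) / 2 := by
      rw [← ih b (x + a 0), intervalIntegral.integral_congr_Ioo_of_le
        (g := fun t => φ (x + a 0 + rademacherSum b (2 * t))),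
        intervalIntegral.integral_comp_mul_left (fun t => φ (x + a 0 + rademacherSum b t))
          two_ne_zero]
      · norm_num; ring
      · norm_num
      · intro t ht
        simp only
        rw [rademacherSum_succ, rademacher_one_of_lt_half ht.1 ht.2, one_mul, add_assoc]
    have h2 : ∫ t in (1 / 2 : ℝ)..1, φ (x + rademacherSum a t) =
        signAverage φ (List.ofFn b) (x - a 0) / 2 := by
      rw [← ih b (x - a 0), intervalIntegral.integral_congr_Ioo_of_le
        (g := fun t => φ (x - a 0 + rademacherSum b (2 * t))),
        intervalIntegral.integral_comp_mul_left (fun t => φ (x - a 0 + rademacherSum b t))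
          two_ne_zero]
      · have h3 := intervalIntegral.integral_comp_add_right (a := 0) (b := 1)
          (fun t => φ (x - a 0 + rademacherSum b t)) 1
        simp only [rademacherSum_add_one] at h3
        rw [h3]; norm_num; ring
      · norm_num
      · intro t ht
        simp only
        rw [rademacherSum_succ, rademacher_one_of_half_lt ht.1 ht.2]
        congr 1; ring
    rw [← intervalIntegral.integral_add_adjacent_intervals (h_int a x 0 (1 / 2)) (h_int a x _ 1),
      h1, h2, List.ofFn_succ, signAverage]
    ring

theorem integral_comp_rademacherSum {φ : ℝ → ℝ} (hφ : Continuous φ) {N : ℕ} (a : Fin N → ℝ) :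
    ∫ t in Set.Icc (0 : ℝ) 1, φ (rademacherSum a t) = signAverage φ (List.ofFn a) 0 := by
  rw [integral_Icc_eq_integral_Ioc, ← intervalIntegral.integral_of_le zero_le_one,
    ← intervalIntegral_comp_rademacherSum hφ]
  simp

theorem signAverage_sq (l : List ℝ) (x : ℝ) :
    signAverage (fun y => y ^ 2) l x = x ^ 2 + sqSum l := by
  induction l generalizing x with
  | nil => simp [signAverage]
  | cons a l ih => rw [signAverage, ih, ih, sqSum_cons]; ring

theorem sqSum_ofFn {N : ℕ} (a : Fin N → ℝ) : sqSum (List.ofFn a) = ∑ i, a i ^ 2 := by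
  rw [sqSum, List.map_ofFn, List.sum_ofFn]; rfl

theorem integral_rademacherSum_sq {N : ℕ} (a : Fin N → ℝ) :
    ∫ t in Set.Icc (0 : ℝ) 1, rademacherSum a t ^ 2 = ∑ i, a i ^ 2 := by
  rw [integral_comp_rademacherSum (φ := fun y => y ^ 2) (by fun_prop), signAverage_sq, sqSum_ofFn]
  simp

section Moments

variable {Ω : Type*} [MeasurableSpace Ω] {μ : Measure Ω} {f : Ω → ℝ} {C : ℝ}

theorem integrable_abs_rpow_of_bound [IsFiniteMeasure μ] (hf : Measurable f)
    (hC : ∀ x, |f x| ≤ C) {s : ℝ} (hs : 0 ≤ s) : Integrable (fun x => |f x| ^ s) μ := by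
  refine Integrable.of_bound (by fun_prop) (C ^ s) (ae_of_all _ fun x => ?_)
  rw [norm_of_nonneg (by positivity)]
  exact rpow_le_rpow (abs_nonneg _) (hC x) hs

/-- Lyapunov's interpolation inequality between the moments of order `r` and `2`. -/
theorem integral_abs_rpow_le_mul [IsFiniteMeasure μ] (hf : Measurable f)
    (hC : ∀ x, |f x| ≤ C) {r p : ℝ} (hr : 0 < r) (hrp : r < p) (hp : p < 2) :
    ∫ x, |f x| ^ p ∂μ ≤
      (∫ x, |f x| ^ r ∂μ) ^ ((2 - p) / (2 - r)) * (∫ x, f x ^ 2 ∂μ) ^ ((p - r) / (2 - r)) := by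
  have h2r : 0 < 2 - r := by linarith
  have h2p : 0 < 2 - p := by linarith
  have hpr : 0 < p - r := by linarith
  set θ := (2 - p) / (2 - r)
  set η := (p - r) / (2 - r)
  have hθ : 0 < θ := by positivity
  have hη : 0 < η := by positivity
  have hsum : θ + η = 1 := by simp only [θ, η]; field_simp; ring
  have hmem : ∀ {s q : ℝ}, 0 ≤ s →
      MemLp (fun x => |f x| ^ s) (ENNReal.ofReal q) μ := fun {s q} hs => by
    refine MemLp.of_bound (by fun_prop) (C ^ s) (ae_of_all _ fun x => ?_)
    rw [norm_of_nonneg (by positivity)]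
    exact rpow_le_rpow (abs_nonneg _) (hC x) hs
  have h := integral_mul_le_Lp_mul_Lq_of_nonneg (μ := μ) (p := θ⁻¹) (q := η⁻¹)
    (f := fun x => |f x| ^ (r * θ)) (g := fun x => |f x| ^ (2 * η))
    ⟨by rw [inv_inv, inv_inv, hsum, inv_one], by positivity, by positivity⟩
    (ae_of_all _ fun x => by positivity) (ae_of_all _ fun x => by positivity)
    (hmem (by positivity)) (hmem (by positivity))
  have e1 : ∀ x, |f x| ^ (r * θ) * |f x| ^ (2 * η) = |f x| ^ p := fun x => by
    rw [← rpow_add_of_nonneg (abs_nonneg _) (by positivity) (by positivity)]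
    congr 1; simp only [θ, η]; field_simp; ring
  have e2 : ∀ x, (|f x| ^ (r * θ)) ^ θ⁻¹ = |f x| ^ r := fun x => by
    rw [← rpow_mul (abs_nonneg _), mul_inv_cancel_right₀ hθ.ne']
  have e3 : ∀ x, (|f x| ^ (2 * η)) ^ η⁻¹ = f x ^ 2 := fun x => by
    rw [← rpow_mul (abs_nonneg _), mul_inv_cancel_right₀ hη.ne', rpow_two, sq_abs]
  simpa only [e1, e2, e3, one_div, inv_inv] using h

theorem integral_sq_rpow_le [IsProbabilityMeasure μ] (hf : Measurable f)
    (hC : ∀ x, |f x| ≤ C) {r : ℝ} (hr : 2 ≤ r) :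
    (∫ x, f x ^ 2 ∂μ) ^ (r / 2) ≤ ∫ x, |f x| ^ r ∂μ := by
  have e : ∀ x, |f x| ^ r = (f x ^ 2) ^ (r / 2) := fun x => by
    rw [← sq_abs, ← rpow_natCast, ← rpow_mul (abs_nonneg _)]; push_cast; ring_nf
  have h1 := integrable_abs_rpow_of_bound (μ := μ) hf hC zero_le_two
  have h2 := integrable_abs_rpow_of_bound (μ := μ) hf hC (by linarith : 0 ≤ r)
  simp only [rpow_two, sq_abs] at h1
  simp only [e] at h2 ⊢
  exact (convexOn_rpow (by linarith : 1 ≤ r / 2)).map_integral_le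
    (continuousOn_id.rpow_const fun _ _ => Or.inr (by linarith)) isClosed_Ici
    (ae_of_all _ fun x => sq_nonneg (f x)) h1 h2

end Moments

theorem sqrt_le_mul_rpow_of_mul_rpow_le {M R c r : ℝ} (hM : 0 ≤ M) (hc : 0 < c) (hr : 0 < r)
    (h : c * M ^ (r / 2) ≤ R) : M ^ (1 / 2 : ℝ) ≤ c ^ (-(1 / r)) * R ^ (1 / r) := by
  have h1 := rpow_le_rpow (by positivity) h (one_div_pos.2 hr).le
  rw [mul_rpow hc.le (by positivity), ← rpow_mul hM,
    show r / 2 * (1 / r) = 1 / 2 by field_simp] at h1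
  rw [rpow_neg hc.le, ← div_eq_inv_mul, le_div_iff₀ (by positivity), mul_comm]
  exact h1

theorem khintchineP0_lt_two : khintchineP0 < 2 := by
  obtain ⟨p, h1, -, h2, -⟩ := exists_khintchineP0_le
  exact h1.trans_lt h2

theorem khintchineA_nonneg (r : ℝ) : 0 ≤ khintchineA r := by
  unfold khintchineA
  split_ifs with h1 h2
  · positivity
  · have hr := (Gamma_le_of_khintchineP0_lt (not_le.1 h1) h2).1
    have := Gamma_pos_of_pos (by linarith : 0 < (r + 1) / 2)
    positivity
  · exact zero_le_one

instance isProbabilityMeasure_restrict_Icc :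
    IsProbabilityMeasure (volume.restrict (Set.Icc (0 : ℝ) 1)) := ⟨by simp⟩

theorem gaussAbsMoment_mul_le_integral {p : ℝ} (hp : 9 / 5 ≤ p) (hp2 : p < 2)
    (hC : gaussAbsMoment p ≤ 2 ^ (p / 2 - 1)) {N : ℕ} (a : Fin N → ℝ) :
    gaussAbsMoment p * (∑ i, a i ^ 2) ^ (p / 2) ≤
      ∫ t in Set.Icc (0 : ℝ) 1, |rademacherSum a t| ^ p := by
  rw [integral_comp_rademacherSum (φ := fun y => |y| ^ p)
    (continuous_abs.rpow_const fun _ => Or.inr (by linarith)), ← sqSum_ofFn]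
  exact gaussAbsMoment_mul_le_signAverage hp hp2 hC _

theorem two_rpow_mul_le_integral {r : ℝ} (hr : 0 < r) (h : r ≤ khintchineP0) {N : ℕ}
    (a : Fin N → ℝ) :
    2 ^ (r / 2 - 1) * (∑ i, a i ^ 2) ^ (r / 2) ≤
      ∫ t in Set.Icc (0 : ℝ) 1, |rademacherSum a t| ^ r := by
  obtain ⟨p, hp0, hp1, hp2, hp3⟩ := exists_khintchineP0_le
  have h1 := gaussAbsMoment_mul_le_integral hp1.le hp2 (gaussAbsMoment_le_iff_Gamma_le.2 hp3.le) a
  have h2 : gaussAbsMoment p = 2 ^ (p / 2 - 1) := by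
    have := sqrt_pos.2 pi_pos
    rw [gaussAbsMoment, hp3, rpow_sub_one two_ne_zero]; field_simp
  rw [h2] at h1
  rcases (h.trans hp0).eq_or_lt with rfl | hrp
  · exact h1
  set M := ∑ i, a i ^ 2
  set R := ∫ t in Set.Icc (0 : ℝ) 1, |rademacherSum a t| ^ r
  have hR : 0 ≤ R := integral_nonneg fun t => by positivity
  rcases (show 0 ≤ M from Finset.sum_nonneg fun i _ => sq_nonneg _).eq_or_lt with hM | hM
  · rw [← hM, zero_rpow (by positivity), mul_zero]; exact hR
  have h3 := h1.trans (integral_abs_rpow_le_mul (measurable_rademacherSum a)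
    (abs_rademacherSum_le a) hr hrp hp2)
  rw [integral_rademacherSum_sq] at h3
  have h2r : 0 < 2 - r := by linarith
  have h2p : 0 < 2 - p := by linarith
  have h4 : (2 ^ (r / 2 - 1) * M ^ (r / 2)) ^ ((2 - p) / (2 - r)) ≤ R ^ ((2 - p) / (2 - r)) := by
    rw [mul_rpow (by positivity) (by positivity), ← rpow_mul two_pos.le, ← rpow_mul hM.le,
      show (r / 2 - 1) * ((2 - p) / (2 - r)) = p / 2 - 1 by field_simp; ring,
      show r / 2 * ((2 - p) / (2 - r)) = p / 2 - (p - r) / (2 - r) by field_simp; ring,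
      rpow_sub hM, mul_div_assoc', div_le_iff₀ (by positivity)]
    exact h3
  exact (rpow_le_rpow_iff (by positivity) hR (by positivity)).1 h4

/-- Khintchine's inequality with the optimal constant. -/
theorem khintchine {r : ℝ} (hr : 0 < r) {N : ℕ} (a : Fin N → ℝ) :
    (∑ i, a i ^ 2) ^ (1 / 2 : ℝ) ≤ khintchineA r *
      (∫ t in Set.Icc (0 : ℝ) 1, |rademacherSum a t| ^ r) ^ (1 / r) := by
  have hM : 0 ≤ ∑ i, a i ^ 2 := Finset.sum_nonneg fun i _ => sq_nonneg _
  unfold khintchineA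
  split_ifs with h1 h2
  · refine (sqrt_le_mul_rpow_of_mul_rpow_le hM (by positivity) hr
      (two_rpow_mul_le_integral hr h1 a)).trans_eq ?_
    rw [← rpow_mul two_pos.le]
    congr 2; field_simp; ring
  · obtain ⟨h3, h4⟩ := Gamma_le_of_khintchineP0_lt (not_le.1 h1) h2
    refine (sqrt_le_mul_rpow_of_mul_rpow_le hM (gaussAbsMoment_pos hr) hr
      (gaussAbsMoment_mul_le_integral h3 h2 (gaussAbsMoment_le_iff_Gamma_le.2 h4) a)).trans_eq ?_
    have := Gamma_pos_of_pos (by linarith : 0 < (r + 1) / 2)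
    rw [gaussAbsMoment, mul_div_assoc, mul_rpow (by positivity) (by positivity),
      ← rpow_mul two_pos.le, sqrt_eq_rpow 2, one_div (2 ^ (1 / 2 : ℝ)), ← rpow_neg two_pos.le,
      show r / 2 * -(1 / r) = -(1 / 2) by field_simp]
  · have h3 := integral_sq_rpow_le (μ := volume.restrict (Set.Icc (0 : ℝ) 1))
      (measurable_rademacherSum a) (abs_rademacherSum_le a) (not_lt.1 h2)
    rw [integral_rademacherSum_sq, ← one_mul (_ ^ (r / 2))] at h3
    simpa only [one_rpow] using sqrt_le_mul_rpow_of_mul_rpow_le hM one_pos hr h3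

/-- Minkowski's integral inequality for nonnegative functions indexed by a finite type. -/
theorem sum_integral_rpow_le {Ω ι : Type*} [MeasurableSpace Ω] [Fintype ι] {μ : Measure Ω}
    {g : ι → Ω → ℝ} (hg : ∀ i, Integrable (g i) μ) (h0 : ∀ i x, 0 ≤ g i x) {q : ℝ} (hq : 1 ≤ q) :
    (∑ i, (∫ x, g i x ∂μ) ^ q) ^ (1 / q) ≤ ∫ x, (∑ i, g i x ^ q) ^ (1 / q) ∂μ := by
  have hqt : (ENNReal.ofReal q).toReal = q := ENNReal.toReal_ofReal (by linarith)
  have : Fact (1 ≤ ENNReal.ofReal q) := ⟨by simpa using hq⟩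
  let G : Ω → PiLp (ENNReal.ofReal q) fun _ : ι => ℝ := fun x => WithLp.toLp _ fun i => g i x
  have hG : Integrable G μ :=
    (PiLp.continuousLinearEquiv (ENNReal.ofReal q) ℝ fun _ : ι => ℝ).symm.toContinuousLinearMap
      |>.integrable_comp (φ := fun x i => g i x) (Integrable.of_eval hg)
  have hGi : ∀ i, (∫ x, G x ∂μ) i = ∫ x, g i x ∂μ := fun i =>
    ((PiLp.proj (𝕜 := ℝ) (ENNReal.ofReal q) (fun _ : ι => ℝ) i).integral_comp_comm hG).symm
  have h := norm_integral_le_integral_norm (μ := μ) G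
  simpa only [PiLp.norm_eq_sum (p := ENNReal.ofReal q) (by rw [hqt]; linarith), hqt, hGi,
    norm_of_nonneg (integral_nonneg (h0 _)), G, norm_of_nonneg (h0 _ _)] using h

/-- The Rademacher chaos `∑ y_{i₁ ⋯ i_m} r_{i₁} ⋯ r_{i_m}`. -/
noncomputable def rademacherChaos {m N : ℕ} (y : (Fin m → Fin N) → ℝ) (t : Fin m → ℝ) : ℝ :=
  ∑ i : Fin m → Fin N, (∏ k, rademacher ((i k).1 + 1) (t k)) * y i

theorem measurable_rademacherChaos {m N : ℕ} (y : (Fin m → Fin N) → ℝ) :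
    Measurable (rademacherChaos y) :=
  Finset.measurable_sum _ fun _ _ => (Finset.measurable_prod _ fun k _ =>
    (measurable_rademacher _).comp (measurable_pi_apply k)).mul_const _

theorem abs_rademacherChaos_le {m N : ℕ} (y : (Fin m → Fin N) → ℝ) (t : Fin m → ℝ) :
    |rademacherChaos y t| ≤ ∑ i, |y i| := by
  refine (Finset.abs_sum_le_sum_abs _ _).trans (Finset.sum_le_sum fun i _ => ?_)
  rw [abs_mul, Finset.abs_prod]
  exact mul_le_of_le_one_left (abs_nonneg _)
    (Finset.prod_le_one (fun _ _ => abs_nonneg _) fun _ _ => abs_rademacher_le_one _ _)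

theorem sum_fin_succ_arrow {m N : ℕ} (f : (Fin (m + 1) → Fin N) → ℝ) :
    ∑ i, f i = ∑ i : Fin m → Fin N, ∑ j, f (Fin.cons j i) := by
  rw [← Fintype.sum_equiv (Fin.consEquiv fun _ => Fin N)
    (fun x => f (Fin.cons x.1 x.2)) f fun _ => rfl]
  exact Fintype.sum_prod_type_right _

theorem rademacherChaos_cons {m N : ℕ} (y : (Fin (m + 1) → Fin N) → ℝ) (s : ℝ) (t : Fin m → ℝ) :
    rademacherChaos y (Fin.cons s t : Fin (m + 1) → ℝ) =
      rademacherChaos (fun i => rademacherSum (fun j => y (Fin.cons j i)) s) t := by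
  simp only [rademacherChaos, rademacherSum, sum_fin_succ_arrow, Fin.prod_univ_succ,
    Fin.cons_zero, Fin.cons_succ, Finset.mul_sum]
  exact Finset.sum_congr rfl fun i _ => Finset.sum_congr rfl fun j _ => by ring

theorem integral_rademacherChaos_succ {ν : Measure ℝ} [IsProbabilityMeasure ν] {m N : ℕ}
    (y : (Fin (m + 1) → Fin N) → ℝ) {r : ℝ} (hr : 0 ≤ r) :
    Integrable (fun s => ∫ t, |rademacherChaos
        (fun i => rademacherSum (fun j => y (Fin.cons j i)) s) t| ^ r
          ∂(Measure.pi fun _ : Fin m => ν)) ν ∧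
    ∫ t, |rademacherChaos y t| ^ r ∂(Measure.pi fun _ => ν) =
      ∫ s, ∫ t, |rademacherChaos (fun i => rademacherSum (fun j => y (Fin.cons j i)) s) t| ^ r
        ∂(Measure.pi fun _ : Fin m => ν) ∂ν := by
  have hmp := (measurePreserving_piFinSuccAbove (fun _ : Fin (m + 1) => ν) 0).symm
  have he : ∀ x, (MeasurableEquiv.piFinSuccAbove (fun _ : Fin (m + 1) => ℝ) 0).symm x =
      (Fin.cons x.1 x.2 : Fin (m + 1) → ℝ) := fun x => Fin.insertNth_zero' _ _
  have h1 := integrable_abs_rpow_of_bound (μ := Measure.pi fun _ : Fin (m + 1) => ν)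
    (measurable_rademacherChaos y) (abs_rademacherChaos_le y) hr
  have h2 := (hmp.integrable_comp_emb (MeasurableEquiv.measurableEmbedding _)).2 h1
  rw [← hmp.integral_comp']
  simp only [Function.comp_def, he, rademacherChaos_cons] at h2 ⊢
  exact ⟨h2.integral_prod_left, integral_prod _ h2⟩

theorem sum_sq_rpow_le_of_forall_rademacherSum {ν : Measure ℝ} [IsProbabilityMeasure ν] {r K : ℝ}
    (hr : 0 < r) (hr2 : r ≤ 2) (hK : 0 ≤ K) {N : ℕ}
    (h : ∀ a : Fin N → ℝ, (∑ i, a i ^ 2) ^ (r / 2) ≤ K * ∫ t, |rademacherSum a t| ^ r ∂ν)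
    {m : ℕ} (y : (Fin m → Fin N) → ℝ) :
    (∑ i, y i ^ 2) ^ (r / 2) ≤
      K ^ m * ∫ t, |rademacherChaos y t| ^ r ∂(Measure.pi fun _ => ν) := by
  induction m with
  | zero =>
    simp only [rademacherChaos, Finset.univ_unique, Finset.sum_singleton, Finset.univ_eq_empty,
      Finset.prod_empty, one_mul, pow_zero, integral_const, probReal_univ, smul_eq_mul]
    rw [← sq_abs, ← rpow_natCast, ← rpow_mul (abs_nonneg _)]
    apply le_of_eq; push_cast; ring_nf
  | succ m ih =>
    obtain ⟨h_int, heq⟩ := integral_rademacherChaos_succ (ν := ν) y hr.le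
    set z : (Fin m → Fin N) → ℝ → ℝ := fun i => rademacherSum fun j => y (Fin.cons j i) with hz
    have hz2 : ∀ i s, (|z i s| ^ r) ^ (2 / r) = z i s ^ 2 := fun i s => by
      rw [← rpow_mul (abs_nonneg _), mul_div_cancel₀ _ hr.ne', rpow_two, sq_abs]
    have hzint : ∀ i, Integrable (fun s => |z i s| ^ r) ν := fun i =>
      integrable_abs_rpow_of_bound (measurable_rademacherSum _) (abs_rademacherSum_le _) hr.le
    have hV : ∀ i, 0 ≤ ∫ s, |z i s| ^ r ∂ν := fun i => integral_nonneg fun _ => by positivity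
    have hmink := sum_integral_rpow_le hzint (fun _ _ => by positivity)
      ((one_le_div hr).2 hr2)
    simp only [hz2, one_div_div] at hmink
    have hsq : ∀ i, ∑ j, y (Fin.cons j i) ^ 2 ≤ (K * ∫ s, |z i s| ^ r ∂ν) ^ (2 / r) := fun i => by
      have h1 := rpow_le_rpow (by positivity) (h fun j => y (Fin.cons j i))
        (by positivity : 0 ≤ 2 / r)
      rwa [← rpow_mul (Finset.sum_nonneg fun _ _ => sq_nonneg _),
        show r / 2 * (2 / r) = 1 by field_simp, rpow_one] at h1
    calc (∑ i, y i ^ 2) ^ (r / 2)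
        ≤ (∑ i, (K * ∫ s, |z i s| ^ r ∂ν) ^ (2 / r)) ^ (r / 2) := by
          rw [sum_fin_succ_arrow fun i => y i ^ 2]
          exact rpow_le_rpow (Finset.sum_nonneg fun _ _ => Finset.sum_nonneg fun _ _ => sq_nonneg _)
            (Finset.sum_le_sum fun i _ => hsq i) (by positivity)
      _ = K * (∑ i, (∫ s, |z i s| ^ r ∂ν) ^ (2 / r)) ^ (r / 2) := by
          simp only [mul_rpow hK (hV _), ← Finset.mul_sum]
          rw [mul_rpow (by positivity) (Finset.sum_nonneg fun i _ => rpow_nonneg (hV i) _),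
            ← rpow_mul hK, show 2 / r * (r / 2) = 1 by field_simp, rpow_one]
      _ ≤ K * ∫ s, (∑ i, z i s ^ 2) ^ (r / 2) ∂ν := by gcongr
      _ ≤ K * ∫ s, K ^ m * ∫ t, |rademacherChaos (fun i => z i s) t| ^ r
            ∂(Measure.pi fun _ : Fin m => ν) ∂ν := by
          refine mul_le_mul_of_nonneg_left (integral_mono_of_nonneg
            (ae_of_all _ fun _ => by positivity) (h_int.const_mul _)
            (ae_of_all _ fun s => ih fun i => z i s)) hK
      _ = _ := by rw [integral_const_mul, ← mul_assoc, ← pow_succ', heq]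

theorem khintchine_rpow {r : ℝ} (hr : 0 < r) {N : ℕ} (a : Fin N → ℝ) :
    (∑ i, a i ^ 2) ^ (r / 2) ≤ khintchineA r ^ r *
      ∫ t in Set.Icc (0 : ℝ) 1, |rademacherSum a t| ^ r := by
  have hR : 0 ≤ ∫ t in Set.Icc (0 : ℝ) 1, |rademacherSum a t| ^ r :=
    integral_nonneg fun _ => by positivity
  have h := rpow_le_rpow (by positivity) (khintchine hr a) hr.le
  rwa [mul_rpow (khintchineA_nonneg r) (rpow_nonneg hR _), ← rpow_mul hR,
    one_div_mul_cancel hr.ne', rpow_one, ← rpow_mul (Finset.sum_nonneg fun _ _ => sq_nonneg _),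
    one_div_mul_eq_div] at h

theorem khintchineA_of_two_le {r : ℝ} (hr : 2 ≤ r) : khintchineA r = 1 := by
  rw [khintchineA, if_neg (not_le.2 (khintchineP0_lt_two.trans_le hr)), if_neg (not_lt.2 hr)]

theorem sum_sq_rpow_le_integral_rademacherChaos {r : ℝ} (hr : 0 < r) {m N : ℕ}
    (y : (Fin m → Fin N) → ℝ) :
    (∑ i, y i ^ 2) ^ (r / 2) ≤ (khintchineA r ^ m) ^ r *
      ∫ t, |rademacherChaos y t| ^ r
        ∂(Measure.pi fun _ => volume.restrict (Set.Icc (0 : ℝ) 1)) := by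
  rcases le_total r 2 with hr2 | hr2
  · have h := sum_sq_rpow_le_of_forall_rademacherSum hr hr2
      (rpow_nonneg (khintchineA_nonneg r) r) (khintchine_rpow hr) y
    rwa [← rpow_mul_natCast (khintchineA_nonneg r), mul_comm r,
      rpow_natCast_mul (khintchineA_nonneg r)] at h
  · rw [khintchineA_of_two_le hr2, one_pow, one_rpow, one_mul]
    refine le_trans ?_ (integral_sq_rpow_le (measurable_rademacherChaos y)
      (abs_rademacherChaos_le y) hr2)
    have h := sum_sq_rpow_le_of_forall_rademacherSum two_pos le_rfl
      (rpow_nonneg (khintchineA_nonneg 2) 2) (khintchine_rpow two_pos) y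
    simp only [khintchineA_of_two_le le_rfl, one_pow, one_mul, rpow_two, sq_abs, div_self
      (two_ne_zero (α := ℝ)), rpow_one] at h
    gcongr

/-- Multiple Khintchine inequality with constant `(A_r)^m`. -/
theorem multiple_khintchine (r : ℝ) (hr : 0 < r) (m : ℕ) (hm : 1 ≤ m) (N : ℕ)
    (y : (Fin m → Fin N) → ℝ) :
    (∑ i : Fin m → Fin N, |y i| ^ (2 : ℝ)) ^ ((1 : ℝ) / 2)
      ≤ khintchineA r ^ m *
        (∫ t : Fin m → ℝ in Set.Icc 0 1,
          |∑ i : Fin m → Fin N, (∏ k, rademacher ((i k).1 + 1) (t k)) * y i| ^ r) ^ (1 / r) := by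
  have h := sum_sq_rpow_le_integral_rademacherChaos hr y
  rw [← Measure.restrict_pi_pi, ← volume_pi,
    show (Set.univ.pi fun _ : Fin m => Set.Icc (0 : ℝ) 1) = Set.Icc 0 1 from
      Set.pi_univ_Icc 0 1] at h
  have hA := pow_nonneg (khintchineA_nonneg r) m
  have hR : 0 ≤ ∫ t : Fin m → ℝ in Set.Icc 0 1, |rademacherChaos y t| ^ r :=
    integral_nonneg fun _ => by positivity
  have h1 := rpow_le_rpow (by positivity) h (one_div_pos.2 hr).le
  rw [mul_rpow (rpow_nonneg hA _) hR, ← rpow_mul hA, mul_one_div_cancel hr.ne', rpow_one,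
    ← rpow_mul (Finset.sum_nonneg fun _ _ => sq_nonneg _),
    show r / 2 * (1 / r) = 1 / 2 by field_simp] at h1
  simpa only [rpow_two, sq_abs, rademacherChaos] using h1
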